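/- arXiv:math/0104238 — 5 statements merged into one kernel-verified Lean document; each statement's English description precedes it below -/
import Mathlib

section
/- There exist constants c₁, c₂ > 0 with the following property: for every integer n ≥ 1, every bivariate polynomial P ∈ ℂ[z,w] of total degree at most n, every z₀ ∈ ℂ, and all radii 0 < R₁ ≤ R₂, writing f(z) = P(z, e^z) and M(R) = max_{|z−z₀|≤R} |f(z)|, one has M(R₂) ≤ M(R₁) · e^{c₁ R₂ n} · (R₂/R₁)^{c₂ n²}. -/
lemma bw_exists_chain (n : ℕ) (P : MvPolynomial (Fin 2) ℂ) (hP : P.totalDegree ≤ n) :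
    ∃ F : ℕ → ℂ → ℂ, ∃ ω : ℕ → ℝ, (∀ i, 0 ≤ ω i ∧ ω i ≤ n) ∧
      (∀ z, F 0 z = MvPolynomial.eval ![z, Complex.exp z] P) ∧
      (∀ i z, HasDerivAt (F i) (ω i * F i z + F (i + 1) z) z) ∧
      ∀ z, F ((n + 1) ^ 2) z = 0 := by
  let ω : ℕ → ℕ := fun i => i % (n + 1)
  let Q : ℕ → (Fin 2 →₀ ℕ) → Polynomial ℂ := fun m s =>
    ∏ i ∈ Finset.range m, (Polynomial.X + Polynomial.C ((s 1 : ℂ) - ω i))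
  let G : ℕ → (Fin 2 →₀ ℕ) → Polynomial ℂ := fun m s =>
    Polynomial.aeval (Polynomial.derivative (R := ℂ)) (Q m s)
      (Polynomial.C (P.coeff s) * Polynomial.X ^ (s 0))
  refine ⟨fun m z => ∑ s ∈ P.support, (G m s).eval z * Complex.exp (s 1 * z),
    fun i => (ω i : ℝ), ?_, ?_, ?_, ?_⟩
  · intro i
    refine ⟨by positivity, ?_⟩
    have : ω i ≤ n := Nat.lt_succ_iff.mp (Nat.mod_lt _ (Nat.succ_pos n))
    simpa using this
  · intro z
    rw [MvPolynomial.eval_eq']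
    refine Finset.sum_congr rfl fun s _ => ?_
    simp [G, Q, Complex.exp_nat_mul, mul_assoc]
  · intro i z
    have hG : ∀ s, G (i + 1) s = Polynomial.derivative (G i s)
        + Polynomial.C ((s 1 : ℂ) - ω i) * G i s := by
      intro s
      simp only [G, Q]
      rw [Finset.prod_range_succ, mul_comm, map_mul (Polynomial.aeval _), Module.End.mul_apply]
      simp only [map_add, Polynomial.aeval_X, Polynomial.aeval_C, LinearMap.add_apply,
        Module.algebraMap_end_apply, Polynomial.smul_eq_C_mul]
    have key : ∀ s ∈ P.support, HasDerivAt (fun z => (G i s).eval z * Complex.exp (s 1 * z))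
        ((ω i : ℂ) * ((G i s).eval z * Complex.exp (s 1 * z))
          + (G (i + 1) s).eval z * Complex.exp (s 1 * z)) z := by
      intro s _
      have h1 := (G i s).hasDerivAt z
      have h2 := (((hasDerivAt_id z).const_mul (s 1 : ℂ))).cexp
      have h3 := h1.mul h2
      refine h3.congr_deriv ?_
      rw [hG]
      simp
      ring
    have := HasDerivAt.fun_sum key
    refine this.congr_deriv ?_
    rw [Finset.sum_add_distrib, Finset.mul_sum]
    simp
  · intro z
    refine Finset.sum_eq_zero fun s hs => ?_
    have hdeg : s 0 + s 1 ≤ n := by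
      have := (MvPolynomial.le_totalDegree hs).trans hP
      rwa [Finsupp.sum_fintype _ _ (by simp), Fin.sum_univ_two] at this
    have hdvd : (Polynomial.X : Polynomial ℂ) ^ (n + 1) ∣ Q ((n + 1) ^ 2) s := by
      let S : Finset ℕ := (Finset.range (n + 1)).image (fun j => j * (n + 1) + s 1)
      have hinj : Set.InjOn (fun j => j * (n + 1) + s 1) (Finset.range (n + 1) : Set ℕ) := by
        intro a _ b _ h
        have h' : a * (n + 1) = b * (n + 1) := by simpa using h
        exact Nat.eq_of_mul_eq_mul_right (Nat.succ_pos n) h'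
      have hS : S ⊆ Finset.range ((n + 1) ^ 2) := by
        intro x hx
        obtain ⟨j, hj, rfl⟩ := Finset.mem_image.mp hx
        rw [Finset.mem_range] at hj ⊢
        nlinarith
      have := Finset.prod_dvd_prod_of_subset S _
        (fun i => (Polynomial.X + Polynomial.C ((s 1 : ℂ) - ω i) : Polynomial ℂ)) hS
      rw [Finset.prod_image hinj] at this
      have h2 : ∏ x ∈ Finset.range (n + 1),
          (Polynomial.X + Polynomial.C ((s 1 : ℂ) - ω (x * (n + 1) + s 1)) : Polynomial ℂ)
          = Polynomial.X ^ (n + 1) := by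
        rw [Finset.prod_congr rfl (g := fun _ => Polynomial.X), Finset.prod_const,
          Finset.card_range]
        intro x _
        have : ω (x * (n + 1) + s 1) = s 1 := by
          simp only [ω]
          rw [Nat.mul_add_mod', Nat.mod_eq_of_lt (by omega)]
        rw [this]; simp
      rw [h2] at this
      exact this
    obtain ⟨Y, hY⟩ := hdvd
    have : G ((n + 1) ^ 2) s = 0 := by
      simp only [G]
      rw [hY, mul_comm, map_mul (Polynomial.aeval _), Module.End.mul_apply]
      simp only [map_pow, Polynomial.aeval_X]
      rw [Module.End.pow_apply, Polynomial.iterate_derivative_eq_zero, map_zero]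
      refine (Polynomial.natDegree_C_mul_X_pow_le _ _).trans_lt (by omega)
    rw [this]; simp

lemma bw_cauchy (F : ℕ → ℂ → ℂ) (ω : ℕ → ℝ) (D : ℝ) (hω : ∀ i, 0 ≤ ω i ∧ ω i ≤ D)
    (hF : ∀ i z, HasDerivAt (F i) (ω i * F i z + F (i + 1) z) z)
    (z₀ : ℂ) (R A : ℝ) (hR : 0 < R) (N : ℕ) (hN : 0 < N)
    (hA : ∀ z ∈ Metric.closedBall z₀ R, ‖F 0 z‖ ≤ A) (k : ℕ) (hk : k ≤ N) :
    ∀ z ∈ Metric.closedBall z₀ (R * (1 - k / N)), ‖F k z‖ ≤ A * (N / R + D) ^ k := by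
  induction k with
  | zero => intro z hz; simpa using hA z (by simpa using hz)
  | succ k ih =>
    intro z hz
    have ih := ih (by omega)
    have hN' : (0 : ℝ) < N := by exact_mod_cast hN
    have hδ : 0 < R / N := by positivity
    have hsub : ∀ w ∈ Metric.closedBall z (R / N),
        w ∈ Metric.closedBall z₀ (R * (1 - k / N)) := by
      intro w hw
      rw [Metric.mem_closedBall] at *
      have : R * (1 - ((k + 1 : ℕ) : ℝ) / N) + R / N = R * (1 - k / N) := by
        push_cast; field_simp; ring
      linarith [dist_triangle w z z₀]
    have hd : Differentiable ℂ (F k) := fun z => (hF k z).differentiableAt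
    have h1 := Complex.norm_deriv_le_of_forall_mem_sphere_norm_le hδ
      (hd.diffContOnCl) (fun w hw => ih w (hsub w (Metric.sphere_subset_closedBall hw)))
    rw [(hF k z).deriv] at h1
    have h2 := ih z (hsub z (Metric.mem_closedBall_self hδ.le))
    have h3 : ‖F (k + 1) z‖ ≤ ‖ω k * F k z + F (k + 1) z‖ + ‖(ω k : ℂ) * F k z‖ := by
      have := norm_sub_le (ω k * F k z + F (k + 1) z) ((ω k : ℂ) * F k z)
      simpa using this
    have h4 : ‖(ω k : ℂ) * F k z‖ ≤ D * (A * (N / R + D) ^ k) := by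
      rw [norm_mul, Complex.norm_real, Real.norm_of_nonneg (hω k).1]
      exact mul_le_mul (hω k).2 h2 (norm_nonneg _) ((hω k).1.trans (hω k).2)
    calc _ ≤ A * (N / R + D) ^ k / (R / N) + D * (A * (N / R + D) ^ k) := by linarith
      _ = _ := by rw [pow_succ]; field_simp

lemma bw_step (h g : ℂ → ℂ) (w D : ℝ) (hw : 0 ≤ w ∧ w ≤ D) (z₀ u : ℂ) (hu : ‖u‖ = 1)
    (hh : ∀ z, HasDerivAt h (w * h z + g z) z) (p p' : ℝ → ℝ)
    (hp : ∀ t, HasDerivAt p (p' t) t) (hp0 : ∀ t, 0 ≤ t → 0 ≤ p t)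
    (hg : ∀ t : ℝ, 0 ≤ t → ‖g (z₀ + t * u)‖ ≤ Real.exp (D * t) * p' t)
    (h0 : ‖h z₀‖ ≤ p 0) (t : ℝ) (ht : 0 ≤ t) :
    ‖h (z₀ + t * u)‖ ≤ Real.exp (D * t) * p t := by
  set a : ℝ := w * u.re with ha
  have hre : |u.re| ≤ 1 := hu ▸ Complex.abs_re_le_norm u
  have haD : a ≤ D := by
    have := (abs_le.mp hre).2
    nlinarith [hw.1, hw.2]
  have hnorm : ∀ x : ℝ, ‖Complex.exp (-(w * u) * x)‖ = Real.exp (-a * x) := by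
    intro x
    rw [Complex.norm_exp]
    simp [ha]
  have hline : ∀ x : ℝ, HasDerivAt (fun x : ℝ => z₀ + (x : ℂ) * u) u x := by
    intro x
    have := ((Complex.ofRealCLM.hasDerivAt (x := x)).mul_const u).const_add z₀
    simpa using this
  have hexp : ∀ x : ℝ, HasDerivAt (fun x : ℝ => Complex.exp (-(w * u) * x))
      (Complex.exp (-(w * u) * x) * (-(w * u))) x := by
    intro x
    have := ((Complex.ofRealCLM.hasDerivAt (x := x)).const_mul (-(w * u))).cexp
    simpa using this
  have hφ : ∀ x : ℝ, HasDerivAt (fun x : ℝ => Complex.exp (-(w * u) * x) * h (z₀ + x * u))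
      (Complex.exp (-(w * u) * x) * (u * g (z₀ + x * u))) x := by
    intro x
    have h1 := (hh (z₀ + x * u)).comp x (hline x)
    have h2 := (hexp x).mul h1
    refine h2.congr_deriv ?_
    simp only [Function.comp]
    ring
  have hB : ∀ x : ℝ, HasDerivAt (fun x : ℝ => Real.exp ((D - a) * x) * p x)
      (Real.exp ((D - a) * x) * (D - a) * p x + Real.exp ((D - a) * x) * p' x) x := by
    intro x
    have h1 : HasDerivAt (fun x : ℝ => Real.exp ((D - a) * x)) (Real.exp ((D - a) * x) * (D - a)) x := by
      have := ((hasDerivAt_id x).const_mul (D - a)).exp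
      simpa using this
    exact h1.mul (hp x)
  have main := image_norm_le_of_norm_deriv_right_le_deriv_boundary (a := 0) (b := t)
    (f := fun x : ℝ => Complex.exp (-(w * u) * x) * h (z₀ + x * u))
    (fun x _ => (hφ x).continuousAt.continuousWithinAt) (fun x _ => (hφ x).hasDerivWithinAt)
    (by simpa using h0) hB (by
      intro x hx
      rw [norm_mul, hnorm, norm_mul, hu, one_mul]
      have h1 := hg x hx.1
      have h2 : Real.exp (-a * x) * ‖g (z₀ + x * u)‖ ≤ Real.exp ((D - a) * x) * p' x := by
        calc _ ≤ Real.exp (-a * x) * (Real.exp (D * x) * p' x) := by gcongr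
          _ = _ := by rw [← mul_assoc, ← Real.exp_add]; congr 2; ring
      have h3 : 0 ≤ Real.exp ((D - a) * x) * (D - a) * p x := by
        have := hp0 x hx.1
        have : 0 ≤ D - a := by linarith
        positivity
      linarith) ⟨ht, le_rfl⟩
  simp only [norm_mul] at main
  rw [hnorm] at main
  calc ‖h (z₀ + t * u)‖ = Real.exp (a * t) * (Real.exp (-a * t) * ‖h (z₀ + t * u)‖) := by
        rw [← mul_assoc, ← Real.exp_add]; simp
    _ ≤ Real.exp (a * t) * (Real.exp ((D - a) * t) * p t) := by gcongr
    _ = _ := by rw [← mul_assoc, ← Real.exp_add]; congr 2; ring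

lemma bw_pderiv (q : ℝ) (j : ℕ) (t : ℝ) :
    HasDerivAt (fun t : ℝ => ∑ i ∈ Finset.range (j + 1), (q * t) ^ i / (i.factorial : ℝ))
      (q * ∑ i ∈ Finset.range j, (q * t) ^ i / (i.factorial : ℝ)) t := by
  induction j with
  | zero => simpa using hasDerivAt_const t (1 : ℝ)
  | succ j ih =>
    have h1 : HasDerivAt (fun t : ℝ => (q * t) ^ (j + 1) / ((j + 1).factorial : ℝ))
        (q * ((q * t) ^ j / (j.factorial : ℝ))) t := by
      have := (((hasDerivAt_id t).const_mul q).pow (j + 1)).div_const ((j + 1).factorial : ℝ)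
      refine this.congr_deriv ?_
      simp [Nat.factorial_succ]
      have : (j.factorial : ℝ) ≠ 0 := by positivity
      field_simp
    have h2 := ih.add h1
    rw [Finset.sum_range_succ, mul_add]
    refine h2.congr_of_eventuallyEq (Filter.Eventually.of_forall fun x => ?_)
    simp only [Pi.add_apply]
    rw [Finset.sum_range_succ]

lemma bw_growth (F : ℕ → ℂ → ℂ) (ω : ℕ → ℝ) (D : ℝ) (hω : ∀ i, 0 ≤ ω i ∧ ω i ≤ D)
    (hF : ∀ i z, HasDerivAt (F i) (ω i * F i z + F (i + 1) z) z)
    (z₀ u : ℂ) (hu : ‖u‖ = 1) (A q : ℝ) (hA : 0 ≤ A) (hq : 0 ≤ q) (N : ℕ)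
    (hN : ∀ z, F N z = 0)
    (hb : ∀ k ≤ N, ‖F k z₀‖ ≤ A * q ^ k) (j : ℕ) :
    ∀ k, k + j = N → ∀ t : ℝ, 0 ≤ t → ‖F k (z₀ + t * u)‖ ≤
      Real.exp (D * t) * (A * q ^ k * ∑ i ∈ Finset.range j, (q * t) ^ i / (i.factorial : ℝ)) := by
  induction j with
  | zero =>
    intro k hk t ht
    obtain rfl : k = N := by omega
    simp [hN]
  | succ j ih =>
    intro k hk t ht
    refine bw_step (F k) (F (k + 1)) (ω k) D (hω k) z₀ u hu (hF k)
      (fun t => A * q ^ k * ∑ i ∈ Finset.range (j + 1), (q * t) ^ i / (i.factorial : ℝ)) _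
      (fun t => (bw_pderiv q j t).const_mul _) ?_ ?_ ?_ t ht
    · intro t ht; positivity
    · intro t ht
      refine (ih (k + 1) (by omega) t ht).trans (le_of_eq ?_)
      rw [pow_succ]; ring
    · have : ∑ i ∈ Finset.range (j + 1), (q * 0) ^ i / (i.factorial : ℝ) = 1 := by
        rw [Finset.sum_range_succ']; simp
      rw [this, mul_one]
      exact hb k (by omega)

/-- growth bound for a general ratio -/
lemma bw_direct (n : ℕ) (P : MvPolynomial (Fin 2) ℂ) (hP : P.totalDegree ≤ n) (z₀ : ℂ)
    (R₁ R₂ A : ℝ) (hR : 0 < R₁) (hR2 : R₁ ≤ R₂)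
    (hA : ∀ z ∈ Metric.closedBall z₀ R₁, ‖MvPolynomial.eval ![z, Complex.exp z] P‖ ≤ A) :
    ∀ z ∈ Metric.closedBall z₀ R₂, ‖MvPolynomial.eval ![z, Complex.exp z] P‖ ≤
      A * (Real.exp (2 * R₂ * n) * (Real.exp 1 * (R₂ / R₁)) ^ ((n + 1) ^ 2)) := by
  obtain ⟨F, ω, hω, hF0, hF, hFN⟩ := bw_exists_chain n P hP
  intro z hz
  have hA0 : 0 ≤ A := (norm_nonneg _).trans (hA z₀ (Metric.mem_closedBall_self hR.le))
  set N := (n + 1) ^ 2 with hNdef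
  have hN : 0 < N := by positivity
  have hN' : (0 : ℝ) < N := by exact_mod_cast hN
  have hc := bw_cauchy F ω n hω hF z₀ R₁ A hR N hN (fun z hz => by rw [hF0]; exact hA z hz)
  set q : ℝ := N / R₁ + n with hq
  have hq0 : 0 ≤ q := by positivity
  have hb : ∀ k ≤ N, ‖F k z₀‖ ≤ A * q ^ k := by
    intro k hk
    refine hc k hk z₀ (Metric.mem_closedBall_self ?_)
    have : (k : ℝ) / N ≤ 1 := by
      rw [div_le_one hN']; exact_mod_cast hk
    exact mul_nonneg hR.le (by linarith)
  obtain ⟨u, hu, hzu⟩ : ∃ u : ℂ, ‖u‖ = 1 ∧ z = z₀ + (‖z - z₀‖ : ℂ) * u := by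
    by_cases h : z = z₀
    · exact ⟨1, by simp, by simp [h]⟩
    · have h' : (‖z - z₀‖ : ℂ) ≠ 0 := by
        exact_mod_cast norm_ne_zero_iff.mpr (sub_ne_zero.mpr h)
      refine ⟨(z - z₀) / ‖z - z₀‖, ?_, ?_⟩
      · rw [norm_div, Complex.norm_real, norm_norm, div_self]
        exact norm_ne_zero_iff.mpr (sub_ne_zero.mpr h)
      · field_simp; ring
  have hg := bw_growth F ω n hω hF z₀ u hu A q hA0 hq0 N hFN hb N 0 (by omega) ‖z - z₀‖
    (norm_nonneg _)
  rw [← hzu, hF0, pow_zero, mul_one] at hg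
  have ht : ‖z - z₀‖ ≤ R₂ := by simpa [dist_eq_norm] using hz
  have hR2' : 0 < R₂ := by linarith
  have hl : 1 ≤ R₂ / R₁ := by rwa [one_le_div hR]
  have hsum : ∑ i ∈ Finset.range N, (q * ‖z - z₀‖) ^ i / (i.factorial : ℝ) ≤
      (R₂ / R₁) ^ N * Real.exp (N + n * R₁) := by
    calc _ ≤ ∑ i ∈ Finset.range N, (R₂ / R₁) ^ N * ((N + n * R₁) ^ i / (i.factorial : ℝ)) := by
          refine Finset.sum_le_sum fun i hi => ?_
          have h1 : q * ‖z - z₀‖ ≤ (R₂ / R₁) * (N + n * R₁) := by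
            calc q * ‖z - z₀‖ ≤ q * R₂ := by gcongr
              _ = _ := by rw [hq]; field_simp
          calc _ ≤ ((R₂ / R₁) * (N + n * R₁)) ^ i / (i.factorial : ℝ) := by gcongr
            _ = (R₂ / R₁) ^ i * ((N + n * R₁) ^ i / (i.factorial : ℝ)) := by
                rw [mul_pow, mul_div_assoc]
            _ ≤ _ := by
                gcongr
                exact (Finset.mem_range.mp hi).le
      _ = (R₂ / R₁) ^ N * ∑ i ∈ Finset.range N, ((N + n * R₁) ^ i / (i.factorial : ℝ)) := by
          rw [Finset.mul_sum]
      _ ≤ _ := by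
          gcongr
          exact Real.sum_le_exp_of_nonneg (by positivity) N
  calc _ ≤ _ := hg
    _ ≤ Real.exp (n * R₂) * (A * ((R₂ / R₁) ^ N * Real.exp (N + n * R₂))) := by
        gcongr
        refine hsum.trans ?_
        gcongr
    _ = _ := by
        rw [mul_pow, ← Real.exp_nat_mul, mul_one, Real.exp_add,
          show 2 * R₂ * (n : ℝ) = n * R₂ + n * R₂ by ring, Real.exp_add]
        ring

lemma bw_interp (f : ℂ → ℂ) (hf : Differentiable ℂ f) (z₀ : ℂ) (R a K : ℝ) (hR : 0 < R)
    (hK : 1 ≤ K) (ha0 : 0 ≤ a)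
    (ha : ∀ z ∈ Metric.closedBall z₀ R, ‖f z‖ ≤ a)
    (hb : ∀ z ∈ Metric.closedBall z₀ (2 * R), ‖f z‖ ≤ a * K)
    (z : ℂ) (h1 : R ≤ ‖z - z₀‖) (h2 : ‖z - z₀‖ ≤ 2 * R) :
    ‖f z‖ ≤ a * K ^ (Real.log (‖z - z₀‖ / R) / Real.log 2) := by
  have hr : 0 < ‖z - z₀‖ := by linarith
  have hz : z - z₀ ≠ 0 := norm_pos_iff.mp hr
  have hul : Real.log R < Real.log (2 * R) := Real.log_lt_log hR (by linarith)
  have hnorm : ∀ s : ℂ, ‖z₀ + Complex.exp s - z₀‖ = Real.exp s.re := by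
    intro s; simp [Complex.norm_exp]
  have hre : (Complex.log (z - z₀)).re = Real.log ‖z - z₀‖ := Complex.log_re _
  have key := Complex.HadamardThreeLines.norm_le_interp_of_mem_verticalClosedStrip'
    (f := fun s => f (z₀ + Complex.exp s)) (z := Complex.log (z - z₀)) (a := a) (b := a * K)
    hul
    (by
      simp only [Complex.HadamardThreeLines.verticalClosedStrip, Set.mem_preimage, Set.mem_Icc, hre]
      exact ⟨Real.log_le_log hR h1, Real.log_le_log hr h2⟩)
    (Differentiable.diffContOnCl
      (hf.comp ((differentiable_const _).add Complex.differentiable_exp)))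
    (by
      refine ⟨a * K, ?_⟩
      rintro _ ⟨s, hs, rfl⟩
      refine hb _ ?_
      rw [mem_closedBall_iff_norm, hnorm, ← Real.le_log_iff_exp_le (by linarith)]
      exact hs.2)
    (by
      intro s hs
      refine ha _ ?_
      rw [mem_closedBall_iff_norm, hnorm, ← Real.le_log_iff_exp_le (by linarith)]
      exact le_of_eq hs)
    (by
      intro s hs
      refine hb _ ?_
      rw [mem_closedBall_iff_norm, hnorm, ← Real.le_log_iff_exp_le (by linarith)]
      exact le_of_eq hs)
  rw [hre, ← Real.log_div hr.ne' hR.ne', ← Real.log_div (by linarith) hR.ne',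
    mul_div_cancel_right₀ _ hR.ne'] at key
  simp only [Complex.exp_log hz, add_sub_cancel] at key
  refine key.trans (le_of_eq ?_)
  rw [Real.mul_rpow ha0 (by linarith), ← mul_assoc, ← Real.rpow_add' ha0 (by simp)]
  simp

lemma bw_e_le_four : Real.exp 1 ≤ 4 := by linarith [Real.exp_one_lt_d9]

lemma bw_pointwise (n : ℕ) (hn : 1 ≤ n) (P : MvPolynomial (Fin 2) ℂ) (hP : P.totalDegree ≤ n)
    (z₀ : ℂ) (R₁ R₂ A : ℝ) (hR : 0 < R₁) (hR2 : R₁ ≤ R₂)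
    (hA : ∀ z ∈ Metric.closedBall z₀ R₁, ‖MvPolynomial.eval ![z, Complex.exp z] P‖ ≤ A) :
    ∀ z ∈ Metric.closedBall z₀ R₂, ‖MvPolynomial.eval ![z, Complex.exp z] P‖ ≤
      A * Real.exp (4 * R₂ * n) * (R₂ / R₁) ^ (12 * (n : ℝ) ^ 2) := by
  intro z hz
  have hA0 : 0 ≤ A := (norm_nonneg _).trans (hA z₀ (Metric.mem_closedBall_self hR.le))
  have hl : 1 ≤ R₂ / R₁ := by rwa [one_le_div hR]
  have hl0 : 0 < R₂ / R₁ := by linarith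
  have hR2' : 0 < R₂ := by linarith
  have hn' : (1 : ℝ) ≤ n := by exact_mod_cast hn
  have hNn : (3 : ℝ) * (((n + 1) ^ 2 : ℕ) : ℝ) ≤ 12 * (n : ℝ) ^ 2 := by
    push_cast; nlinarith
  by_cases h2 : 2 ≤ R₂ / R₁
  · refine (bw_direct n P hP z₀ R₁ R₂ A hR hR2 hA z hz).trans ?_
    rw [mul_assoc A (Real.exp (4 * R₂ * n))]
    refine mul_le_mul_of_nonneg_left (mul_le_mul ?_ ?_ (by positivity) (by positivity)) hA0
    · refine Real.exp_le_exp.mpr ?_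
      have : 0 ≤ R₂ * n := by positivity
      linarith
    · have h3 : Real.exp 1 * (R₂ / R₁) ≤ (R₂ / R₁) ^ (3 : ℕ) := by
        have : Real.exp 1 ≤ (R₂ / R₁) ^ 2 := by nlinarith [bw_e_le_four]
        calc Real.exp 1 * (R₂ / R₁) ≤ (R₂ / R₁) ^ 2 * (R₂ / R₁) :=
              mul_le_mul_of_nonneg_right this hl0.le
          _ = _ := by ring
      calc _ ≤ ((R₂ / R₁) ^ (3 : ℕ)) ^ ((n + 1) ^ 2) := by gcongr
        _ = (R₂ / R₁) ^ ((3 : ℝ) * (((n + 1) ^ 2 : ℕ) : ℝ)) := by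
            rw [← pow_mul, ← Real.rpow_natCast]; norm_cast
        _ ≤ _ := Real.rpow_le_rpow_of_exponent_le hl hNn
  · push Not at h2
    have hR22 : R₂ ≤ 2 * R₁ := by
      rw [div_lt_iff₀ hR] at h2; exact h2.le
    have hz' : ‖z - z₀‖ ≤ R₂ := by simpa [dist_eq_norm] using hz
    by_cases hz1 : ‖z - z₀‖ ≤ R₁
    · refine (hA z (by simpa [dist_eq_norm] using hz1)).trans ?_
      have e1 : 1 ≤ Real.exp (4 * R₂ * n) := Real.one_le_exp (by positivity)
      have e2 : 1 ≤ (R₂ / R₁) ^ (12 * (n : ℝ) ^ 2) := Real.one_le_rpow hl (by positivity)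
      rw [mul_assoc]
      exact le_mul_of_one_le_right hA0 (one_le_mul_of_one_le_of_one_le e1 e2)
    · push Not at hz1
      set K : ℝ := Real.exp (4 * R₁ * n) * (2 : ℝ) ^ ((3 : ℝ) * (((n + 1) ^ 2 : ℕ) : ℝ)) with hK
      have hb : ∀ z ∈ Metric.closedBall z₀ (2 * R₁),
          ‖MvPolynomial.eval ![z, Complex.exp z] P‖ ≤ A * K := by
        intro z hz
        refine (bw_direct n P hP z₀ R₁ (2 * R₁) A hR (by linarith) hA z hz).trans ?_
        rw [hK]
        refine mul_le_mul_of_nonneg_left (mul_le_mul ?_ ?_ (by positivity) (by positivity)) hA0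
        · exact Real.exp_le_exp.mpr (le_of_eq (by ring))
        · rw [mul_div_cancel_right₀ _ hR.ne']
          calc _ ≤ ((2 : ℝ) ^ (3 : ℕ)) ^ ((n + 1) ^ 2) := by
                gcongr; linarith [bw_e_le_four]
            _ = (2 : ℝ) ^ ((3 : ℝ) * (((n + 1) ^ 2 : ℕ) : ℝ)) := by
                rw [← pow_mul, ← Real.rpow_natCast]; norm_cast
      have hK1 : 1 ≤ K := one_le_mul_of_one_le_of_one_le (Real.one_le_exp (by positivity))
        (Real.one_le_rpow (by norm_num) (by positivity))
      obtain ⟨F, ω, _, hF0, hF, _⟩ := bw_exists_chain n P hP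
      have hd : Differentiable ℂ (fun z => MvPolynomial.eval ![z, Complex.exp z] P) := by
        have : (fun z => MvPolynomial.eval ![z, Complex.exp z] P) = F 0 := by
          funext z; exact (hF0 z).symm
        rw [this]
        exact fun z => (hF 0 z).differentiableAt
      have key := bw_interp _ hd z₀ R₁ A K hR hK1 hA0 hA hb z hz1.le (hz'.trans hR22)
      refine key.trans ?_
      set t := Real.log (‖z - z₀‖ / R₁) / Real.log 2 with ht
      have hlog2 : 0 < Real.log 2 := Real.log_pos (by norm_num)
      have hq1 : 1 ≤ ‖z - z₀‖ / R₁ := by rw [one_le_div hR]; exact hz1.le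
      have ht0 : 0 ≤ t := div_nonneg (Real.log_nonneg hq1) hlog2.le
      have ht1 : t ≤ 1 := by
        rw [ht, div_le_one hlog2]
        refine Real.log_le_log (by linarith) ?_
        rw [div_le_iff₀ hR]; linarith
      have h2t : (2 : ℝ) ^ t = ‖z - z₀‖ / R₁ := by
        rw [Real.rpow_def_of_pos (by norm_num), ht, mul_div_cancel₀ _ hlog2.ne',
          Real.exp_log (by linarith)]
      rw [mul_assoc]
      gcongr
      rw [hK, Real.mul_rpow (by positivity) (by positivity)]
      gcongr
      · calc Real.exp (4 * R₁ * n) ^ t ≤ Real.exp (4 * R₁ * n) ^ (1 : ℝ) :=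
              Real.rpow_le_rpow_of_exponent_le (Real.one_le_exp (by positivity)) ht1
          _ = Real.exp (4 * R₁ * n) := Real.rpow_one _
          _ ≤ _ := by gcongr
      · rw [← Real.rpow_mul (by norm_num), mul_comm, Real.rpow_mul (by norm_num), h2t]
        calc _ ≤ (R₂ / R₁) ^ ((3 : ℝ) * (((n + 1) ^ 2 : ℕ) : ℝ)) := by gcongr
          _ ≤ _ := Real.rpow_le_rpow_of_exponent_le hl hNn


/-- (Tijdeman/Baker doubling estimate for exponential polynomials.)
There are constants `c₁, c₂ > 0` such that for every exponential polynomial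
`f(z) = P(z, e^z)` with `P` of total degree at most `n ≥ 1`, every centre `z₀` and all
radii `0 < R₁ ≤ R₂`, one has `M(R₂) ≤ M(R₁) e^{c₁ R₂ n} (R₂/R₁)^{c₂ n²}` where
`M(R) = max_{|z - z₀| ≤ R} |f(z)|`. -/
theorem bernstein_walsh_exponential_polynomials :
    ∃ c₁ > (0 : ℝ), ∃ c₂ > (0 : ℝ),
      ∀ n : ℕ, 1 ≤ n → ∀ P : MvPolynomial (Fin 2) ℂ, P.totalDegree ≤ n →
      ∀ z₀ : ℂ, ∀ R₁ R₂ : ℝ, 0 < R₁ → R₁ ≤ R₂ →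
        sSup ((fun z : ℂ => ‖MvPolynomial.eval ![z, Complex.exp z] P‖) ''
            Metric.closedBall z₀ R₂) ≤
          sSup ((fun z : ℂ => ‖MvPolynomial.eval ![z, Complex.exp z] P‖) ''
              Metric.closedBall z₀ R₁) *
            Real.exp (c₁ * R₂ * n) * (R₂ / R₁) ^ (c₂ * (n : ℝ) ^ 2) := by
  refine ⟨4, by norm_num, 12, by norm_num, ?_⟩
  intro n hn P hP z₀ R₁ R₂ hR hR2
  have hcont : Continuous (fun z : ℂ => ‖MvPolynomial.eval ![z, Complex.exp z] P‖) := by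
    obtain ⟨F, ω, _, hF0, hF, _⟩ := bw_exists_chain n P hP
    have : (fun z => MvPolynomial.eval ![z, Complex.exp z] P) = F 0 := by
      funext z; exact (hF0 z).symm
    refine Continuous.norm ?_
    rw [this]
    exact continuous_iff_continuousAt.mpr fun z => (hF 0 z).continuousAt
  have hbdd := ((isCompact_closedBall z₀ R₁).image hcont).bddAbove
  refine csSup_le ((Metric.nonempty_closedBall.mpr (hR.le.trans hR2)).image _) ?_
  rintro _ ⟨z, hz, rfl⟩
  exact bw_pointwise n hn P hP z₀ R₁ R₂ _ hR hR2
    (fun w hw => le_csSup hbdd ⟨w, hw, rfl⟩) z hz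
end

section
/- For all radii 0 < R₁ ≤ R₂ there is a constant C = C(R₁,R₂) ≥ 1, which may be taken of the form e^{c₁R₂}·(R₂/R₁)^{c₂} for absolute constants c₁, c₂, such that: for every z₀ ∈ ℂ, every integer n ≥ 1, and every bivariate polynomial P ∈ ℂ[z,w] of total degree at most n with max_{|z−z₀|≤R₁} |P(z, e^z)| ≤ 1, one has |P(z, e^z)| ≤ C^{n²} for all z ∈ ℂ with |z−z₀| ≤ R₂. (Equivalently: the generalized Siciak extremal function Φ_K(z; V, φ), taken with K the closed disk of radius R₁ centred at z₀, V_n = {P(z,e^z) : deg P ≤ n}, and exponent function φ(n) = n², is bounded by C on the disk of radius R₂ centred at z₀.) -/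
/-- Fencing estimate for a finite chain of first order linear differential equations. -/
lemma chain_fence (R n K : ℝ) (hR : 0 < R) (hn : 0 ≤ n) (hK : n < K) (N : ℕ) :
    ∀ (φ φ' : ℕ → ℝ → ℂ) (c : ℕ → ℝ), (∀ m, 0 < c m) →
      (∀ t, φ N t = 0) → (∀ m, ‖φ m 0‖ ≤ c m) →
      (∀ m t, HasDerivAt (φ m) (φ' m t) t) →
      (∀ m t, ‖φ' m t‖ ≤ R * (n * ‖φ m t‖ + ‖φ (m + 1) t‖)) →
      ∀ t, 0 ≤ t → ‖φ 0 t‖ ≤ Real.exp (K * R * t) *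
        ∑ k ∈ Finset.range N, (R * t) ^ k / (k.factorial : ℝ) * c k := by
  induction N with
  | zero =>
    intro φ φ' c hc h0 hi hd hb t ht
    simp [h0]
  | succ N ih =>
    intro φ φ' c hc h0 hi hd hb t ht
    have ih' := ih (fun m => φ (m + 1)) (fun m => φ' (m + 1)) (fun m => c (m + 1))
      (fun m => hc _) h0 (fun m => hi _) (fun m t => hd _ t) (fun m t => hb _ t)
    set S : ℝ → ℝ := fun t => ∑ k ∈ Finset.range (N + 1), (R * t) ^ k / (k.factorial : ℝ) * c k
      with hS
    set S' : ℝ → ℝ := fun t => ∑ k ∈ Finset.range N, (R * t) ^ k / (k.factorial : ℝ) * c (k + 1)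
      with hS'
    have hSd : ∀ t, HasDerivAt S (R * S' t) t := by
      intro t
      have e : S = fun t => (∑ k ∈ Finset.range N,
          (R * t) ^ (k + 1) / ((k + 1).factorial : ℝ) * c (k + 1)) + c 0 := by
        funext t
        simp [hS, Finset.sum_range_succ']
      rw [e, hS', Finset.mul_sum]
      refine HasDerivAt.add_const _ (HasDerivAt.fun_sum fun k _ => ?_)
      have h1 : HasDerivAt (fun t : ℝ => R * t) R t := by
        simpa using (hasDerivAt_id t).const_mul R
      have h2 := ((h1.pow (k + 1)).div_const ((k + 1).factorial : ℝ)).mul_const (c (k + 1))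
      refine HasDerivAt.congr_deriv h2 ?_
      have : ((k.factorial : ℕ) : ℝ) ≠ 0 := by positivity
      rw [Nat.factorial_succ]
      push_cast
      field_simp
    have hBd : ∀ t, HasDerivAt (fun t => Real.exp (K * R * t) * S t)
        (R * (K * (Real.exp (K * R * t) * S t) + Real.exp (K * R * t) * S' t)) t := by
      intro t
      have h1 : HasDerivAt (fun t : ℝ => K * R * t) (K * R) t := by
        simpa using (hasDerivAt_id t).const_mul (K * R)
      refine HasDerivAt.congr_deriv (h1.exp.mul (hSd t)) ?_
      ring
    have hSpos : ∀ t, 0 ≤ t → 0 < S t := by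
      intro t ht
      apply Finset.sum_pos' 
      · intro k _
        have := hc k
        positivity
      · exact ⟨0, by simp, by simpa using hc 0⟩
    refine image_norm_le_of_norm_deriv_right_lt_deriv_boundary (a := 0) (b := t) (f := φ 0)
      (f' := φ' 0) (B := fun t => Real.exp (K * R * t) * S t)
      (fun x _ => (hd 0 x).continuousAt.continuousWithinAt)
      (fun x _ => (hd 0 x).hasDerivWithinAt) ?_ hBd ?_ ⟨ht, le_rfl⟩
    · have : S 0 = c 0 := by simp [hS, Finset.sum_range_succ']
      simpa [this] using hi 0
    · intro x hx heq
      refine (hb 0 x).trans_lt ?_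
      have h1 := ih' x hx.1
      have h2 : 0 < Real.exp (K * R * x) * S x := mul_pos (Real.exp_pos _) (hSpos x hx.1)
      refine mul_lt_mul_of_pos_left ?_ hR
      rw [heq]
      refine add_lt_add_of_lt_of_le (mul_lt_mul_of_pos_right hK h2) h1

/-- Bounds for the Taylor coefficients of successive images under `D - ω`. -/
lemma chain_cauchy (r : ℝ) (hr : 0 < r) (n X : ℕ) (hX : n * r ≤ X) (ω : ℕ → ℕ)
    (hω : ∀ i, ω i ≤ n) (a : ℕ → ℕ → ℂ) (h0 : ∀ j, ‖a 0 j‖ ≤ j.factorial / r ^ j)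
    (hs : ∀ m j, a (m + 1) j = a m (j + 1) - ω m * a m j) :
    ∀ m j, ‖a m j‖ ≤ (m + j).factorial / r ^ (m + j) * (m + X).choose m := by
  intro m
  induction m with
  | zero => intro j; simpa using h0 j
  | succ m ih =>
    intro j
    rw [hs]
    have h1 : ‖a m (j + 1) - ω m * a m j‖ ≤ ‖a m (j + 1)‖ + n * ‖a m j‖ := by
      refine (norm_sub_le _ _).trans ?_
      rw [norm_mul]
      gcongr
      simpa using hω m
    have hch : ((m + 1 + X).choose (m + 1) : ℝ) = (m + X).choose m * ((m + 1 + X) / (m + 1)) := by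
      have := Nat.add_one_mul_choose_eq (m + X) m
      have h' : ((m + X + 1 : ℕ) : ℝ) * (m + X).choose m
          = (m + X + 1).choose (m + 1) * ((m + 1 : ℕ) : ℝ) := by exact_mod_cast this
      rw [show m + 1 + X = m + X + 1 by ring]
      push_cast at h'
      field_simp
      linarith
    refine h1.trans ?_
    have i1 := ih (j + 1)
    have i2 := ih j
    have e1 : m + (j + 1) = (m + j) + 1 := by ring
    have e2 : m + 1 + j = (m + j) + 1 := by ring
    rw [e1] at i1
    rw [e2, hch]
    set q := m + j with hq
    set c : ℝ := ((m + X).choose m : ℝ)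
    have hc : 0 ≤ c := by positivity
    calc ‖a m (j + 1)‖ + n * ‖a m j‖
        ≤ (q + 1).factorial / r ^ (q + 1) * c + n * (q.factorial / r ^ q * c) := by gcongr
      _ = (q + 1).factorial / r ^ (q + 1) * (c * (1 + n * r / (q + 1))) := by
          rw [Nat.factorial_succ]; push_cast; field_simp; ring
      _ ≤ (q + 1).factorial / r ^ (q + 1) * (c * (1 + X / (m + 1))) := by
          gcongr
          have : m ≤ q := by omega
          exact_mod_cast this
      _ = _ := by
          field_simp

open Polynomial in
/-- Repeated application of `D - ω i` to `p e^{kz}`, at the level of the polynomial `p`. -/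
noncomputable def polyIter (ω : ℕ → ℕ) (k : ℕ) (p : ℂ[X]) : ℕ → ℂ[X]
  | 0 => p
  | m + 1 => derivative (polyIter ω k p m) + C ((k : ℂ) - ω m) * polyIter ω k p m

open Polynomial in
lemma polyIter_natDegree (ω : ℕ → ℕ) (k n : ℕ) (p : ℂ[X]) (hp : p.natDegree ≤ n) (m : ℕ) :
    (polyIter ω k p m).natDegree ≤ n := by
  induction m with
  | zero => exact hp
  | succ m ih =>
    refine natDegree_add_le_of_degree_le ?_ ?_
    · exact (natDegree_derivative_le _).trans (by omega)
    · exact (natDegree_C_mul_le _ _).trans ih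

open Polynomial in
lemma polyIter_eq_zero (n k : ℕ) (hk : k ≤ n) (p : ℂ[X]) (hp : p.natDegree ≤ n) :
    polyIter (fun i => min (i / (n + 1)) n) k p ((n + 1) * (n + 1)) = 0 := by
  set ω : ℕ → ℕ := fun i => min (i / (n + 1)) n with hω
  have h1 : ∀ j ≤ n + 1, polyIter ω k p (k * (n + 1) + j)
      = derivative^[j] (polyIter ω k p (k * (n + 1))) := by
    intro j
    induction j with
    | zero => intro _; rfl
    | succ j ih =>
      intro hj
      have : ω (k * (n + 1) + j) = k := by
        have : (k * (n + 1) + j) / (n + 1) = k := by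
          rw [mul_comm, Nat.mul_add_div (by omega), Nat.div_eq_of_lt (by omega)]; rfl
        simp [hω, this, hk]
      rw [← add_assoc, polyIter, this, ih (by omega), Function.iterate_succ_apply']
      simp
  have h2 : polyIter ω k p (k * (n + 1) + (n + 1)) = 0 := by
    rw [h1 _ le_rfl]
    exact iterate_derivative_eq_zero (Nat.lt_succ_of_le (polyIter_natDegree ω k n p hp _))
  have h3 : ∀ j, polyIter ω k p (k * (n + 1) + (n + 1) + j) = 0 := by
    intro j
    induction j with
    | zero => exact h2
    | succ j ih => rw [← add_assoc, polyIter, ih]; simp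
  have h4 : k * (n + 1) + (n + 1) ≤ (n + 1) * (n + 1) := by nlinarith
  obtain ⟨j, hj⟩ := Nat.exists_eq_add_of_le h4
  rw [hj]
  exact h3 j

open Polynomial in
/-- The exponential polynomial attached to a family of polynomials. -/
noncomputable def expPoly (n : ℕ) (p : ℕ → ℂ[X]) (z : ℂ) : ℂ :=
  ∑ k ∈ Finset.range (n + 1), (p k).eval z * Complex.exp (k * z)

open Polynomial in
lemma expPoly_hasDerivAt (n : ℕ) (p : ℕ → ℂ[X]) (ω : ℕ → ℕ) (m : ℕ) (z : ℂ) :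
    HasDerivAt (expPoly n (fun k => polyIter ω k (p k) m))
      (expPoly n (fun k => polyIter ω k (p k) (m + 1)) z
        + ω m * expPoly n (fun k => polyIter ω k (p k) m) z) z := by
  unfold expPoly
  rw [Finset.mul_sum, ← Finset.sum_add_distrib]
  refine HasDerivAt.fun_sum fun k _ => ?_
  have h1 : HasDerivAt (fun z : ℂ => (k : ℂ) * z) k z := by
    simpa using (hasDerivAt_id z).const_mul (k : ℂ)
  refine HasDerivAt.congr_deriv (((polyIter ω k (p k) m).hasDerivAt z).mul h1.cexp) ?_
  simp only [polyIter, eval_add, eval_mul, eval_C]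
  ring

open Polynomial in
lemma mvPoly_eq_expPoly (n : ℕ) (P : MvPolynomial (Fin 2) ℂ) (hP : P.totalDegree ≤ n) :
    ∃ p : ℕ → ℂ[X], (∀ k, (p k).natDegree ≤ n) ∧
      ∀ z, MvPolynomial.eval ![z, Complex.exp z] P = expPoly n p z := by
  have hdeg : ∀ d ∈ P.support, d 0 ≤ n ∧ d 1 ≤ n := by
    intro d hd
    have h := (MvPolynomial.le_totalDegree hd).trans hP
    rw [Finsupp.sum_fintype _ _ (by simp), Fin.sum_univ_two] at h
    omega
  refine ⟨fun k => ∑ d ∈ P.support, if d 1 = k then C (P.coeff d) * X ^ (d 0) else 0, ?_, ?_⟩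
  · intro k
    refine natDegree_sum_le_of_forall_le _ _ fun d hd => ?_
    split_ifs
    · exact (natDegree_C_mul_X_pow_le _ _).trans (hdeg d hd).1
    · simp
  · intro z
    rw [MvPolynomial.eval_eq', expPoly]
    simp only [eval_finsetSum, Finset.sum_mul]
    rw [Finset.sum_comm]
    refine Finset.sum_congr rfl fun d hd => ?_
    rw [Finset.sum_eq_single (d 1)]
    · simp [Fin.prod_univ_two, Complex.exp_nat_mul, mul_assoc]
    · intro k _ hk
      simp [Ne.symm hk]
    · intro h
      exact absurd (Finset.mem_range.2 (Nat.lt_succ_of_le (hdeg d hd).2)) h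

open Polynomial in
lemma expPoly_bound_raw (n : ℕ) (p : ℕ → ℂ[X]) (hp : ∀ k, (p k).natDegree ≤ n) (r R : ℝ)
    (hr : 0 < r) (hR : 0 < R) (X : ℕ) (hX : n * r ≤ X) (z₀ : ℂ)
    (hf : ∀ z ∈ Metric.closedBall z₀ r, ‖expPoly n p z‖ ≤ 1) :
    ∀ z ∈ Metric.closedBall z₀ R, ‖expPoly n p z‖ ≤ Real.exp ((n + 1) * R) *
      ∑ k ∈ Finset.range ((n + 1) * (n + 1)),
        R ^ k / (k.factorial : ℝ) * (k.factorial / r ^ k * (k + X).choose k) := by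
  intro z hz
  set ω : ℕ → ℕ := fun i => min (i / (n + 1)) n with hω
  have hωn : ∀ i, ω i ≤ n := fun i => min_le_right _ _
  set g : ℕ → ℂ → ℂ := fun m => expPoly n (fun k => polyIter ω k (p k) m) with hg
  have hgd : ∀ m z, HasDerivAt (g m) (g (m + 1) z + ω m * g m z) z :=
    fun m z => expPoly_hasDerivAt n p ω m z
  have hdiff : ∀ m, Differentiable ℂ (g m) := fun m z => (hgd m z).differentiableAt
  have hg0 : g 0 = expPoly n p := rfl
  have hcau := chain_cauchy r hr n X hX ω hωn (fun m j => iteratedDeriv j (g m) z₀)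
    (by
      intro j
      have := Complex.norm_iteratedDeriv_le_of_forall_mem_sphere_norm_le (C := 1) (c := z₀) j hr
        (hdiff 0).diffContOnCl (fun z hz => by
          rw [hg0]; exact hf z (Metric.sphere_subset_closedBall hz))
      simpa using this)
    (by
      intro m j
      have hcd : ∀ m, ContDiffAt ℂ j (g m) z₀ := fun m => (hdiff m).contDiff.contDiffAt
      have e : deriv (g m) = g (m + 1) + fun z => (ω m : ℂ) * g m z := by
        funext z; exact (hgd m z).deriv
      rw [iteratedDeriv_succ', e, iteratedDeriv_add (hcd _) (contDiffAt_const.mul (hcd m)),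
        iteratedDeriv_const_mul_field]
      ring)
  set v : ℂ := z - z₀ with hv
  have hvR : ‖v‖ ≤ R := by simpa [hv, dist_eq_norm] using hz
  have key := chain_fence R n (n + 1) hR (by positivity) (by linarith) ((n + 1) * (n + 1))
    (fun m t => g m (z₀ + t * v))
    (fun m t => (g (m + 1) (z₀ + t * v) + ω m * g m (z₀ + t * v)) * v)
    (fun k => k.factorial / r ^ k * (k + X).choose k)
    (by
      intro m
      have : 0 < (m + X).choose m := Nat.choose_pos (by omega)
      positivity)
    (by
      intro t
      simp only [hg, expPoly]
      refine Finset.sum_eq_zero fun k hk => ?_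
      rw [polyIter_eq_zero n k (Nat.lt_succ_iff.1 (Finset.mem_range.1 hk)) _ (hp k)]
      simp)
    (by
      intro m
      simpa using hcau m 0)
    (by
      intro m t
      have h1 : HasDerivAt (fun t : ℝ => z₀ + t * v) v t := by
        have := ((Complex.ofRealCLM.hasDerivAt (x := t)).mul_const v).const_add z₀
        simpa using this
      exact (hgd m _).comp t h1)
    (by
      intro m t
      rw [norm_mul, mul_comm]
      refine mul_le_mul hvR ?_ (norm_nonneg _) hR.le
      refine (norm_add_le _ _).trans ?_
      rw [norm_mul, add_comm]
      gcongr
      simpa using hωn m)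
    1 zero_le_one
  simpa [hv, hg0] using key

lemma geom_two (q : ℝ) (hq : 4 ≤ q) (N : ℕ) : 2 * ∑ k ∈ Finset.range N, q ^ k ≤ q ^ N := by
  induction N with
  | zero => simp
  | succ N ih =>
    rw [Finset.sum_range_succ, pow_succ]
    have : 0 < q ^ N := by positivity
    nlinarith

open Polynomial in
lemma expPoly_bound_big (n : ℕ) (hn : 1 ≤ n) (p : ℕ → ℂ[X]) (hp : ∀ k, (p k).natDegree ≤ n)
    (r R : ℝ) (hr : 0 < r) (hR : 2 * r ≤ R) (z₀ : ℂ)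
    (hf : ∀ z ∈ Metric.closedBall z₀ r, ‖expPoly n p z‖ ≤ 1) :
    ∀ z ∈ Metric.closedBall z₀ R,
      ‖expPoly n p z‖ ≤ Real.exp (3 * n * R) * (R / r) ^ (8 * n ^ 2) := by
  intro z hz
  have hR0 : 0 < R := by linarith
  have hn' : (1 : ℝ) ≤ n := by exact_mod_cast hn
  set X := ⌈n * r⌉₊ with hX
  have hρ : 2 ≤ R / r := by rwa [le_div_iff₀ hr]
  have hX2 : (X : ℝ) ≤ n * r + 1 := (Nat.ceil_lt_add_one (by positivity)).le
  have h2X : (2 : ℝ) ^ X ≤ 2 * Real.exp (n * R) := by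
    have hl : Real.log 2 ≤ 1 := by linarith [Real.log_two_lt_d9]
    have hl0 : 0 ≤ Real.log 2 := Real.log_nonneg (by norm_num)
    calc (2 : ℝ) ^ X = Real.exp (X * Real.log 2) := by
          rw [Real.exp_nat_mul, Real.exp_log (by norm_num)]
      _ ≤ Real.exp (Real.log 2 + n * R) := by
          apply Real.exp_le_exp.2
          have h1 : (n : ℝ) * r ≤ n * R := by gcongr; linarith
          have h0 : 0 ≤ (n : ℝ) * r := by positivity
          nlinarith
      _ = 2 * Real.exp (n * R) := by rw [Real.exp_add, Real.exp_log (by norm_num)]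
  refine (expPoly_bound_raw n p hp r R hr hR0 X (Nat.le_ceil _) z₀ hf z hz).trans ?_
  set ρ := R / r with hρd
  have hterm : ∀ k ∈ Finset.range ((n + 1) * (n + 1)),
      R ^ k / (k.factorial : ℝ) * (k.factorial / r ^ k * (k + X).choose k)
        ≤ (ρ ^ 2) ^ k * 2 ^ X := by
    intro k _
    have hc : ((k + X).choose k : ℝ) ≤ 2 ^ (k + X) := by
      exact_mod_cast Nat.choose_le_two_pow _ _
    calc R ^ k / (k.factorial : ℝ) * (k.factorial / r ^ k * (k + X).choose k)
        = ρ ^ k * (k + X).choose k := by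
          rw [hρd, div_pow]
          have : ((k.factorial : ℕ) : ℝ) ≠ 0 := by positivity
          field_simp
      _ ≤ ρ ^ k * 2 ^ (k + X) := by gcongr
      _ = (ρ * 2) ^ k * 2 ^ X := by rw [mul_pow, pow_add]; ring
      _ ≤ (ρ ^ 2) ^ k * 2 ^ X := by
          gcongr
          nlinarith
  calc Real.exp ((n + 1) * R) * ∑ k ∈ Finset.range ((n + 1) * (n + 1)),
        R ^ k / (k.factorial : ℝ) * (k.factorial / r ^ k * (k + X).choose k)
      ≤ Real.exp ((n + 1) * R) * ∑ k ∈ Finset.range ((n + 1) * (n + 1)), (ρ ^ 2) ^ k * 2 ^ X := by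
        exact mul_le_mul_of_nonneg_left (Finset.sum_le_sum hterm) (Real.exp_pos _).le
    _ = Real.exp ((n + 1) * R) * ((∑ k ∈ Finset.range ((n + 1) * (n + 1)), (ρ ^ 2) ^ k) * 2 ^ X) := by
        rw [Finset.sum_mul]
    _ ≤ Real.exp ((n + 1) * R) * ((∑ k ∈ Finset.range ((n + 1) * (n + 1)), (ρ ^ 2) ^ k) *
          (2 * Real.exp (n * R))) := by gcongr
    _ = Real.exp ((n + 1) * R + n * R) *
          (2 * ∑ k ∈ Finset.range ((n + 1) * (n + 1)), (ρ ^ 2) ^ k) := by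
        rw [Real.exp_add]; ring
    _ ≤ Real.exp (3 * n * R) * (ρ ^ 2) ^ ((n + 1) * (n + 1)) := by
        gcongr
        · nlinarith
        · exact geom_two _ (by nlinarith) _
    _ ≤ Real.exp (3 * n * R) * ρ ^ (8 * n ^ 2) := by
        rw [← pow_mul]
        have hN : 2 * ((n + 1) * (n + 1)) ≤ 8 * n ^ 2 := by nlinarith
        exact mul_le_mul_of_nonneg_left (pow_le_pow_right₀ (by linarith) hN) (Real.exp_pos _).le

/-- Three circles, in the form needed. -/
lemma three_circles (f : ℂ → ℂ) (hf : Differentiable ℂ f) (z₀ : ℂ) (r M : ℝ) (hr : 0 < r)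
    (h1 : ∀ z ∈ Metric.closedBall z₀ r, ‖f z‖ ≤ 1)
    (h2 : ∀ z ∈ Metric.closedBall z₀ (2 * r), ‖f z‖ ≤ M) (z : ℂ) (hz1 : r ≤ ‖z - z₀‖)
    (hz2 : ‖z - z₀‖ ≤ 2 * r) :
    ‖f z‖ ≤ M ^ (Real.log (‖z - z₀‖ / r) / Real.log 2) := by
  have hzpos : 0 < ‖z - z₀‖ := by linarith
  have hne : z - z₀ ≠ 0 := norm_pos_iff.1 hzpos
  set g : ℂ → ℂ := fun w => f (z₀ + Complex.exp w) with hg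
  have hgd : Differentiable ℂ g := hf.comp (Complex.differentiable_exp.const_add z₀)
  have hle : ∀ w : ℂ, ∀ s : ℝ, 0 < s → w.re ≤ Real.log s →
      z₀ + Complex.exp w ∈ Metric.closedBall z₀ s := by
    intro w s hs hw
    rw [mem_closedBall_iff_norm, add_sub_cancel_left, Complex.norm_exp]
    exact (Real.le_log_iff_exp_le hs).1 hw
  have hul : Real.log r < Real.log (2 * r) := Real.log_lt_log hr (by linarith)
  have key := Complex.HadamardThreeLines.norm_le_interp_of_mem_verticalClosedStrip' (f := g)
    (z := Complex.log (z - z₀)) (a := 1) (b := M) hul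
    (by
      simp only [Complex.HadamardThreeLines.verticalClosedStrip, Set.mem_preimage, Complex.log_re]
      exact ⟨Real.log_le_log hr hz1, Real.log_le_log hzpos hz2⟩)
    hgd.diffContOnCl
    (by
      refine ⟨M, ?_⟩
      rintro _ ⟨w, hw, rfl⟩
      exact h2 _ (hle w _ (by linarith) hw.2))
    (fun w hw => h1 _ (hle w _ hr (le_of_eq hw)))
    (fun w hw => h2 _ (hle w _ (by linarith) (le_of_eq hw)))
  rw [Real.one_rpow, one_mul, Complex.log_re, ← Real.log_div (by positivity) (by positivity),
    ← Real.log_div (by positivity) (by positivity), mul_div_assoc, div_self hr.ne', mul_one] at key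
  simpa [hg, Complex.exp_log hne] using key


/-- Boundedness of the generalized Siciak extremal function (with family
`V_n = {P(z, e^z) : deg P ≤ n}` and exponent function `φ(n) = n²`) for complex disks:
for `0 < R₁ ≤ R₂` there is a constant `C = e^{c₁ R₂} (R₂/R₁)^{c₂} ≥ 1` (with `c₁, c₂`
absolute constants) such that any `P(z, e^z)` with `deg P ≤ n` bounded by `1` on the disk
of radius `R₁` about `z₀` is bounded by `C^{n²}` on the disk of radius `R₂` about `z₀`. -/
theorem siciak_extremal_bounded_disk_exp :
    ∃ c₁ c₂ : ℝ, ∀ R₁ R₂ : ℝ, 0 < R₁ → R₁ ≤ R₂ →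
      1 ≤ Real.exp (c₁ * R₂) * (R₂ / R₁) ^ c₂ ∧
      ∀ z₀ : ℂ, ∀ n : ℕ, 1 ≤ n → ∀ P : MvPolynomial (Fin 2) ℂ, P.totalDegree ≤ n →
        (∀ z ∈ Metric.closedBall z₀ R₁, ‖MvPolynomial.eval ![z, Complex.exp z] P‖ ≤ 1) →
        ∀ z ∈ Metric.closedBall z₀ R₂,
          ‖MvPolynomial.eval ![z, Complex.exp z] P‖ ≤
            (Real.exp (c₁ * R₂) * (R₂ / R₁) ^ c₂) ^ (n ^ 2) := by
  refine ⟨6, 8, fun R₁ R₂ h0 h12 => ?_⟩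
  have hR2 : 0 < R₂ := by linarith
  have hρ : 1 ≤ R₂ / R₁ := by rwa [one_le_div h0]
  have hC : 1 ≤ Real.exp (6 * R₂) * (R₂ / R₁) ^ (8 : ℝ) :=
    one_le_mul_of_one_le_of_one_le (Real.one_le_exp (by positivity))
      (Real.one_le_rpow hρ (by norm_num))
  refine ⟨hC, fun z₀ n hn P hP hb z hz => ?_⟩
  obtain ⟨p, hp, hpe⟩ := mvPoly_eq_expPoly n P hP
  simp only [hpe] at hb ⊢
  have hn' : (1 : ℝ) ≤ n := by exact_mod_cast hn
  have hpow : (Real.exp (6 * R₂) * (R₂ / R₁) ^ (8 : ℝ)) ^ (n ^ 2)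
      = Real.exp (6 * (n : ℝ) ^ 2 * R₂) * (R₂ / R₁) ^ (8 * n ^ 2) := by
    rw [mul_pow, ← Real.exp_nat_mul, show (8 : ℝ) = ((8 : ℕ) : ℝ) by norm_num,
      Real.rpow_natCast, ← pow_mul]
    push_cast
    ring_nf
  by_cases h2 : 2 * R₁ ≤ R₂
  · refine (expPoly_bound_big n hn p hp R₁ R₂ h0 h2 z₀ hb z hz).trans ?_
    rw [hpow]
    gcongr
    · norm_num
    · nlinarith
  · by_cases hz1 : ‖z - z₀‖ ≤ R₁
    · exact (hb z (mem_closedBall_iff_norm.2 hz1)).trans (one_le_pow₀ hC)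
    push Not at h2 hz1
    have hz2 : ‖z - z₀‖ ≤ R₂ := mem_closedBall_iff_norm.1 hz
    have hd : Differentiable ℂ (expPoly n p) :=
      fun w => (expPoly_hasDerivAt n p (fun _ => 0) 0 w).differentiableAt
    refine (three_circles (expPoly n p) hd z₀ R₁ _ h0 hb
      (expPoly_bound_big n hn p hp R₁ (2 * R₁) h0 le_rfl z₀ hb) z hz1.le (by linarith)).trans ?_
    have hzpos : 0 < ‖z - z₀‖ := by linarith
    set x := ‖z - z₀‖ / R₁ with hx
    have hx1 : 1 ≤ x := by rw [hx, one_le_div h0]; exact hz1.le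
    have hx2 : x ≤ 2 := by rw [hx, div_le_iff₀ h0]; linarith
    have hl2 : 0 < Real.log 2 := Real.log_pos (by norm_num)
    set s := Real.log x / Real.log 2 with hs
    have hs0 : 0 ≤ s := div_nonneg (Real.log_nonneg hx1) hl2.le
    have hs1 : s ≤ 1 := by
      rw [hs, div_le_one hl2]
      exact Real.log_le_log (by linarith) hx2
    have h2s : (2 : ℝ) ^ s = x := by
      rw [Real.rpow_def_of_pos (by norm_num), hs, mul_div_cancel₀ _ hl2.ne',
        Real.exp_log (by linarith)]
    rw [mul_div_assoc, div_self h0.ne', mul_one, hpow,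
      Real.mul_rpow (Real.exp_pos _).le (by positivity), ← Real.exp_mul,
      ← Real.rpow_natCast_mul (by norm_num), mul_comm ((8 * n ^ 2 : ℕ) : ℝ) s,
      Real.rpow_mul_natCast (by norm_num), h2s]
    have hxρ : x ≤ R₂ / R₁ := by rw [hx]; gcongr
    refine mul_le_mul (Real.exp_le_exp.2 ?_) (by gcongr) (by positivity) (Real.exp_pos _).le
    have h3 : 0 ≤ 3 * (n : ℝ) * (2 * R₁) := by positivity
    calc 3 * (n : ℝ) * (2 * R₁) * s ≤ 3 * (n : ℝ) * (2 * R₁) * 1 := by gcongr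
      _ = 6 * n * R₁ := by ring
      _ ≤ 6 * (n : ℝ) ^ 2 * R₂ := by
        gcongr
        nlinarith
end

section
/- There is an absolute constant A ≤ 4 with the following property: for every polynomial t ∈ ℂ[z] of degree d ≥ 1, every z₀ ∈ ℂ, all radii R ≥ R₀ > 0, every integer n ≥ 1, every bivariate polynomial P ∈ ℂ[z,w] of total degree at most n, and every c ∈ ℂ, the number of points z with |z−z₀| ≤ R and P(z, e^{t(z)}) = c is at most A·( d n² + d n (R/R₀)^d · max_{|z−z₀|≤R₀} |t(z)| ). In particular, for fixed t, R, R₀, z₀ there is a constant C such that the valency in the disk {|z−z₀| ≤ R} of every function of the form P(z, e^{t(z)}) with deg P ≤ n is at most C n². -/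
section Helpers
open Polynomial

/-- Entire functions. -/
def EntFun : Submodule ℂ (ℂ → ℂ) where
  carrier := {F | Differentiable ℂ F}
  add_mem' := fun ha hb => Differentiable.add ha hb
  zero_mem' := differentiable_const 0
  smul_mem' := fun c _ hf => Differentiable.const_smul hf c

lemma ent_diff (F : EntFun) : Differentiable ℂ (F : ℂ → ℂ) := F.2

/-- Differentiation on entire functions. -/
noncomputable def Dop : EntFun →ₗ[ℂ] EntFun where
  toFun F := ⟨deriv (F : ℂ → ℂ), by
    have h : Differentiable ℂ (F : ℂ → ℂ) := F.2
    exact (h.contDiff (n := 2)).differentiable_deriv_two⟩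
  map_add' F G := by
    ext z
    exact deriv_add (ent_diff F z) (ent_diff G z)
  map_smul' c F := by
    ext z
    exact deriv_const_smul c (ent_diff F z)

lemma Dop_apply (F : EntFun) (z : ℂ) : (Dop F : ℂ → ℂ) z = deriv (F : ℂ → ℂ) z := rfl

lemma Dop_pow_coe (F : EntFun) (j : ℕ) :
    ((Dop ^ j) F : ℂ → ℂ) = iteratedDeriv j (F : ℂ → ℂ) := by
  induction j with
  | zero => simp
  | succ j ih =>
    rw [pow_succ', iteratedDeriv_succ, ← ih]
    rfl

lemma growth (Δ : ℝ) (hΔ : 0 ≤ Δ) (a : ℕ → ℕ → ℝ)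
    (hrec : ∀ k j, a k (j+1) + Δ * a k j ≤ a (k+1) j) (L : List ℂ) (hL : ∀ w ∈ L, ‖w‖ ≤ Δ) :
    ∀ (k : ℕ) (F : EntFun), aeval Dop (L.map (fun w => X - C w)).prod F = 0 →
      (∀ j, ‖((Dop ^ j) F : ℂ → ℂ) 0‖ ≤ a k j) →
      ∀ v : ℂ, ‖(F : ℂ → ℂ) v‖ ≤ Real.exp (Δ * ‖v‖) *
        ∑ i ∈ Finset.range L.length, a (k+i) 0 * ‖v‖ ^ i / (i.factorial : ℝ) := by
  induction L with
  | nil =>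
    intro k F hF _ v
    simp at hF
    simp [hF]
  | cons w L ih =>
    intro k F hF ha v
    have hw : ‖w‖ ≤ Δ := hL w (by simp)
    set G : EntFun := Dop F - w • F with hG
    have hG0 : aeval Dop (L.map (fun w => X - C w)).prod G = 0 := by
      rw [List.map_cons, List.prod_cons, mul_comm, map_mul, Module.End.mul_apply] at hF
      convert hF using 2
      simp [hG]
    have hGa : ∀ j, ‖((Dop ^ j) G : ℂ → ℂ) 0‖ ≤ a (k+1) j := by
      intro j
      have e : (Dop ^ j) G = (Dop ^ (j+1)) F - w • (Dop ^ j) F := by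
        rw [hG, map_sub, map_smul, pow_succ]; rfl
      rw [e]
      have e2 : ((((Dop ^ (j+1)) F - w • (Dop ^ j) F : EntFun)) : ℂ → ℂ) 0
        = ((Dop ^ (j+1)) F : ℂ → ℂ) 0 - w * ((Dop ^ j) F : ℂ → ℂ) 0 := rfl
      rw [e2]
      refine (norm_sub_le _ _).trans (le_trans ?_ (hrec k j))
      rw [norm_mul]
      have h1 := ha (j+1)
      have h2 := ha j
      gcongr
    have hGb := ih (fun w hw => hL w (by simp [hw])) (k+1) G hG0 hGa
    have hG' : ∀ z, deriv (F : ℂ → ℂ) z = (G : ℂ → ℂ) z + w * (F : ℂ → ℂ) z := by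
      intro z
      have : (G : ℂ → ℂ) z = deriv (F : ℂ → ℂ) z - w * (F : ℂ → ℂ) z := rfl
      rw [this]; ring
    set r := ‖v‖ with hr
    have hr0 : 0 ≤ r := norm_nonneg _
    let K : ℝ → ℂ := fun x => Complex.exp (w * v * (1 - x)) * (F : ℂ → ℂ) (v * x)
    let K' : ℝ → ℂ := fun x => v * (Complex.exp (w * v * (1 - x)) * (G : ℂ → ℂ) (v * x))
    let B : ℝ → ℝ := fun x => Real.exp (Δ * r) *
        ∑ i ∈ Finset.range (L.length + 1), a (k+i) 0 * (r * x) ^ i / (i.factorial : ℝ)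
    let B' : ℝ → ℝ := fun x => Real.exp (Δ * r) *
        ∑ i ∈ Finset.range L.length, r * (a (k+1+i) 0 * (r * x) ^ i / (i.factorial : ℝ))
    have hK : ∀ x, HasDerivAt K (K' x) x := by
      intro x
      have h0 : HasDerivAt (fun x : ℝ => (x : ℂ)) 1 x := Complex.ofRealCLM.hasDerivAt
      have h1 : HasDerivAt (fun x : ℝ => Complex.exp (w * v * (1 - (x:ℂ))))
          (Complex.exp (w * v * (1 - (x:ℂ))) * (w * v * (0 - 1))) x :=
        (((hasDerivAt_const x (1:ℂ)).sub h0).const_mul (w*v)).cexp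
      have h2 : HasDerivAt (fun x : ℝ => (F : ℂ → ℂ) (v * x))
          (deriv (F : ℂ → ℂ) (v * x) * (v * 1)) x :=
        (ent_diff F (v*x)).hasDerivAt.comp x (h0.const_mul v)
      refine (h1.mul h2).congr_deriv ?_
      simp only [K', hG']
      ring
    have hB : ∀ x, HasDerivAt B (B' x) x := by
      intro x
      refine HasDerivAt.const_mul _ ?_
      have e : (fun x : ℝ => ∑ i ∈ Finset.range (L.length + 1), a (k+i) 0 * (r * x) ^ i / (i.factorial : ℝ))
         = fun x => ∑ i ∈ Finset.range L.length, a (k+(i+1)) 0 * (r * x) ^ (i+1) / ((i+1).factorial : ℝ) + a k 0 := by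
        funext x; rw [Finset.sum_range_succ']; simp
      rw [e]
      refine HasDerivAt.add_const _ (HasDerivAt.fun_sum fun i _ => ?_)
      have h1 : HasDerivAt (fun x : ℝ => (r * x) ^ (i+1)) (((i+1:ℕ):ℝ) * (r*x)^i * (r * 1)) x := by
        exact ((hasDerivAt_id x).const_mul r).pow (i+1)
      refine ((h1.const_mul (a (k+(i+1)) 0)).div_const ((i+1).factorial : ℝ)).congr_deriv ?_
      rw [Nat.factorial_succ, show k + 1 + i = k + (i+1) by ring]
      push_cast
      have := Nat.factorial_pos i
      field_simp
    have main := image_norm_le_of_norm_deriv_right_le_deriv_boundary' (f := K) (f' := K') (a := 0) (b := 1)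
      (fun x _ => (hK x).continuousAt.continuousWithinAt) (fun x _ => (hK x).hasDerivWithinAt)
      (B := B) (B' := B') ?_ (fun x _ => (hB x).continuousAt.continuousWithinAt)
      (fun x _ => (hB x).hasDerivWithinAt) ?_ (x := 1) (by simp)
    · simpa [K, B] using main
    · simp only [K, B]
      rw [Finset.sum_range_succ']
      have h0 := ha 0
      simp at h0
      simp
      refine mul_le_mul ?_ h0 (norm_nonneg _) (Real.exp_pos _).le
      rw [Complex.norm_exp]
      refine Real.exp_le_exp.2 ((Complex.re_le_norm _).trans ?_)
      rw [norm_mul]; gcongr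
    · intro x hx
      have hx0 : 0 ≤ x := hx.1
      have hx1 : x ≤ 1 := hx.2.le
      have hn : ‖v * (x:ℂ)‖ = r * x := by
        rw [norm_mul, Complex.norm_real, Real.norm_of_nonneg hx0]
      have h1 := hGb (v * x)
      rw [hn] at h1
      have h2 : ‖Complex.exp (w * v * (1 - (x:ℂ)))‖ ≤ Real.exp (Δ * (r * (1 - x))) := by
        rw [Complex.norm_exp]
        refine Real.exp_le_exp.2 ((Complex.re_le_norm _).trans ?_)
        have : (1 - (x:ℂ)) = ((1 - x : ℝ) : ℂ) := by push_cast; ring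
        rw [norm_mul, norm_mul, this, Complex.norm_real, Real.norm_of_nonneg (by linarith), mul_assoc]
        gcongr
      simp only [K', B']
      rw [norm_mul, norm_mul, ← Finset.mul_sum]
      calc r * (‖Complex.exp (w * v * (1 - (x:ℂ)))‖ * ‖(G : ℂ → ℂ) (v * x)‖)
          ≤ r * (Real.exp (Δ * (r * (1 - x))) * (Real.exp (Δ * (r * x)) *
            ∑ i ∈ Finset.range L.length, a (k+1+i) 0 * (r * x) ^ i / (i.factorial : ℝ))) := by gcongr
        _ = _ := by
          have : Real.exp (Δ * r) = Real.exp (Δ * (r * (1 - x))) * Real.exp (Δ * (r * x)) := by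
            rw [← Real.exp_add]; congr 1; ring
          rw [this]; ring

/-- Laplace functional `X^j ↦ j!/ρ^j`. -/
noncomputable def Lam (ρ : ℝ) : ℝ[X] →ₗ[ℝ] ℝ :=
  Polynomial.lsum (fun j => (LinearMap.id : ℝ →ₗ[ℝ] ℝ).smulRight ((j.factorial : ℝ) / ρ ^ j))

lemma Lam_X_pow (ρ : ℝ) (j : ℕ) : Lam ρ (X ^ j) = (j.factorial : ℝ) / ρ ^ j := by
  rw [Lam, Polynomial.lsum_apply, Polynomial.X_pow_eq_monomial, Polynomial.sum_monomial_index] <;> simp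

lemma Lam_pow_le (ρ Δ : ℝ) (hρ : 0 < ρ) (hΔ : 0 ≤ Δ) (k : ℕ) :
    Lam ρ ((X + C Δ) ^ k) ≤ Real.exp (ρ * Δ) * ((k.factorial : ℝ) / ρ ^ k) := by
  have h1 : Lam ρ ((X + C Δ) ^ k) = ((k.factorial : ℝ) / ρ ^ k) *
      ∑ i ∈ Finset.range (k+1), (ρ * Δ) ^ i / (i.factorial : ℝ) := by
    rw [add_comm, add_pow, map_sum, Finset.mul_sum]
    refine Finset.sum_congr rfl fun i hi => ?_
    have hi : i ≤ k := by simpa [Nat.lt_succ_iff] using hi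
    have e : (C Δ ^ i * X ^ (k - i) * (k.choose i : ℝ[X])) = (Δ ^ i * (k.choose i : ℝ)) • (X ^ (k-i) : ℝ[X]) := by
      rw [smul_eq_C_mul]; simp; ring
    rw [e, map_smul, Lam_X_pow, smul_eq_mul, ← Nat.choose_mul_factorial_mul_factorial hi]
    obtain ⟨m, rfl⟩ := Nat.exists_eq_add_of_le hi
    rw [Nat.add_sub_cancel_left]
    push_cast
    have := Nat.factorial_pos i
    field_simp
    ring
  rw [h1, mul_comm]
  gcongr
  exact Real.sum_le_exp_of_nonneg (by positivity) _

/-- Tijdeman type growth estimate. -/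
lemma growth_max (Δ ρ Mx : ℝ) (hΔ : 0 ≤ Δ) (hρ : 0 < ρ) (hM : 0 ≤ Mx) (L : List ℂ)
    (hL : ∀ w ∈ L, ‖w‖ ≤ Δ) (F : EntFun)
    (hF : aeval Dop (L.map (fun w => X - C w)).prod F = 0)
    (hb : ∀ z ∈ Metric.closedBall (0:ℂ) ρ, ‖(F : ℂ → ℂ) z‖ ≤ Mx) (v : ℂ) (hv : ‖v‖ ≤ 9 * ρ) :
    ‖(F : ℂ → ℂ) v‖ ≤ Mx * (Real.exp (10 * ρ * Δ) * (9 ^ L.length / 8)) := by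
  have h1 := growth Δ hΔ (fun k j => Mx * Lam ρ (X ^ j * (X + C Δ) ^ k)) ?_ L hL 0 F hF ?_ v
  · refine h1.trans ?_
    have h2 : ∑ i ∈ Finset.range L.length, Mx * Lam ρ (X ^ 0 * (X + C Δ) ^ (0 + i)) * ‖v‖ ^ i / (i.factorial : ℝ)
        ≤ Mx * (Real.exp (ρ * Δ) * (9 ^ L.length / 8)) := by
      calc _ ≤ ∑ i ∈ Finset.range L.length, Mx * (Real.exp (ρ * Δ) * 9 ^ i) := by
            refine Finset.sum_le_sum fun i _ => ?_
            have h3 := Lam_pow_le ρ Δ hρ hΔ i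
            simp only [pow_zero, one_mul, zero_add]
            calc Mx * Lam ρ ((X + C Δ) ^ i) * ‖v‖ ^ i / (i.factorial : ℝ)
                ≤ Mx * (Real.exp (ρ * Δ) * ((i.factorial : ℝ) / ρ ^ i)) * (9 * ρ) ^ i / (i.factorial : ℝ) := by
                  gcongr
              _ = _ := by
                have := Nat.factorial_pos i
                rw [mul_pow]
                field_simp
        _ = Mx * (Real.exp (ρ * Δ) * ∑ i ∈ Finset.range L.length, (9:ℝ) ^ i) := by
            rw [Finset.mul_sum, Finset.mul_sum]
        _ ≤ _ := by
            gcongr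
            rw [geom_sum_eq (by norm_num)]
            norm_num
            gcongr
            linarith
    calc _ ≤ Real.exp (Δ * ‖v‖) * (Mx * (Real.exp (ρ * Δ) * (9 ^ L.length / 8))) :=
            mul_le_mul_of_nonneg_left h2 (Real.exp_pos _).le
      _ ≤ Real.exp (Δ * (9 * ρ)) * (Mx * (Real.exp (ρ * Δ) * (9 ^ L.length / 8))) := by
            gcongr
      _ = _ := by
        have : Real.exp (10 * ρ * Δ) = Real.exp (Δ * (9 * ρ)) * Real.exp (ρ * Δ) := by
          rw [← Real.exp_add]; congr 1; ring
        rw [this]; ring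
  · intro k j
    have e : (X ^ j * (X + C Δ) ^ (k+1) : ℝ[X]) = X ^ (j+1) * (X + C Δ) ^ k + Δ • (X ^ j * (X + C Δ) ^ k) := by
      rw [smul_eq_C_mul]; ring
    simp only [e, map_add, map_smul, smul_eq_mul]
    apply le_of_eq; ring
  · intro j
    rw [Dop_pow_coe]
    simp only [pow_zero, mul_one, Lam_X_pow]
    refine (Complex.norm_iteratedDeriv_le_of_forall_mem_sphere_norm_le j hρ (ent_diff F).diffContOnCl
      (fun z hz => hb z (Metric.sphere_subset_closedBall hz))).trans (le_of_eq ?_)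
    ring

/-- weighted-degree filtration of exponential polynomials -/
noncomputable def Efil (d : ℕ) (k : ℤ) : Submodule ℂ (ℂ → ℂ) :=
  Submodule.span ℂ {φ | ∃ a b : ℕ, ((d * a + b : ℕ) : ℤ) ≤ k ∧
    φ = fun u => u ^ a * Complex.exp (b * u)}

lemma Efil_mul {d : ℕ} {k l : ℤ} {f g : ℂ → ℂ} (hf : f ∈ Efil d k) (hg : g ∈ Efil d l) :
    f * g ∈ Efil d (k + l) := by
  have h := Submodule.mul_mem_mul hf hg
  rw [Efil, Efil, Submodule.span_mul_span] at h
  refine Submodule.span_mono ?_ h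
  rintro _ ⟨_, ⟨a, b, hab, rfl⟩, _, ⟨a', b', hab', rfl⟩, rfl⟩
  refine ⟨a + a', b + b', by push_cast at *; linarith, ?_⟩
  funext u
  simp only [Pi.mul_apply]
  rw [show ((b + b' : ℕ) : ℂ) * u = b * u + b' * u by push_cast; ring, Complex.exp_add]
  ring

lemma Efil_basic {d : ℕ} {k : ℤ} (a b : ℕ) (h : ((d * a + b : ℕ) : ℤ) ≤ k) :
    (fun u => u ^ a * Complex.exp (b * u)) ∈ Efil d k :=
  Submodule.subset_span ⟨a, b, h, rfl⟩

lemma Efil_const {d : ℕ} {k : ℤ} (h : 0 ≤ k) (c : ℂ) : (fun _ => c) ∈ Efil d k := by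
  have := (Efil d k).smul_mem c (Efil_basic 0 0 (by simpa using h))
  convert this using 1
  funext u; simp

lemma Efil_prod {d : ℕ} {ι : Type*} (s : Finset ι) (f : ι → ℂ → ℂ) (k : ι → ℤ)
    (h : ∀ i ∈ s, f i ∈ Efil d (k i)) : ∏ i ∈ s, f i ∈ Efil d (∑ i ∈ s, k i) := by
  classical
  induction s using Finset.induction_on with
  | empty => simpa using! Efil_const (d := d) le_rfl 1
  | insert i s hi ih =>
    rw [Finset.prod_insert hi, Finset.sum_insert hi]
    exact Efil_mul (h i (by simp)) (ih fun j hj => h j (by simp [hj]))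

lemma resultant_mem (d n : ℕ) (T G : ℂ → ℂ[X])
    (hT : ∀ k ≤ d, (fun u => (T u).coeff k) ∈ Efil d (d - k))
    (hG : ∀ k ≤ n, (fun u => (G u).coeff k) ∈ Efil d (n - k)) :
    (fun u => resultant (T u) (G u) d n) ∈ Efil d (d * n) := by
  let s : Fin (d + n) → ℤ := fun j => j.addCases (fun j₁ => (n:ℤ) + j₁) (fun j₁ => (d:ℤ) + j₁)
  have hent : ∀ i j : Fin (d + n), (fun u => sylvester (T u) (G u) d n i j) ∈ Efil d (s j - ((i : ℕ) : ℤ)) := by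
    intro i j
    induction j using Fin.addCases with
    | left j =>
      simp only [sylvester, Matrix.of_apply, Fin.addCases_left, s]
      by_cases h : (i:ℕ) ∈ Set.Icc (j:ℕ) (j + n)
      · simp only [h, if_true]
        have := hG (i - j) (by have := h.2; omega)
        convert this using 2
        rw [Nat.cast_sub h.1]; ring
      · simp only [h, if_false]
        exact (Efil d _).zero_mem
    | right j =>
      simp only [sylvester, Matrix.of_apply, Fin.addCases_right, s]
      by_cases h : (i:ℕ) ∈ Set.Icc (j:ℕ) (j + d)
      · simp only [h, if_true]
        have := hT (i - j) (by have := h.2; omega)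
        convert this using 2
        rw [Nat.cast_sub h.1]; ring
      · simp only [h, if_false]
        exact (Efil d _).zero_mem
  have hsum : ∑ j, s j - ∑ i : Fin (d + n), ((i : ℕ) : ℤ) = d * n := by
    rw [Fin.sum_univ_add, Fin.sum_univ_add]
    simp only [s, Fin.addCases_left, Fin.addCases_right, Fin.val_castAdd, Fin.val_natAdd]
    push_cast
    simp only [Finset.sum_add_distrib, Finset.sum_const, Finset.card_univ, Fintype.card_fin, nsmul_eq_mul]
    ring
  have e : (fun u => resultant (T u) (G u) d n) = ∑ σ : Equiv.Perm (Fin (d+n)),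
      ((Equiv.Perm.sign σ : ℤ) : ℂ) • ∏ j, (fun u => sylvester (T u) (G u) d n (σ j) j) := by
    funext u
    simp [resultant, Matrix.det_apply', Finset.sum_apply]
  rw [e]
  refine Submodule.sum_mem _ fun σ _ => Submodule.smul_mem _ _ ?_
  have := Efil_prod (d := d) Finset.univ (fun j => (fun u => sylvester (T u) (G u) d n (σ j) j))
    (fun j => s j - (σ j : ℕ)) (fun j _ => hent _ _)
  rw [Finset.sum_sub_distrib, Equiv.sum_comp σ (fun j => ((j : ℕ) : ℤ)), hsum] at this
  exact this

/-- Specialisation in the first variable. -/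
noncomputable def specP (P : MvPolynomial (Fin 2) ℂ) (w : ℂ) : ℂ[X] :=
  ∑ m ∈ P.support, C (P.coeff m * w ^ (m 1)) * X ^ (m 0)

lemma specP_eval (P : MvPolynomial (Fin 2) ℂ) (z w : ℂ) :
    (specP P w).eval z = MvPolynomial.eval ![z, w] P := by
  rw [MvPolynomial.eval_eq', specP, eval_finsetSum]
  refine Finset.sum_congr rfl fun m _ => ?_
  simp; ring

lemma supp_le (P : MvPolynomial (Fin 2) ℂ) (n : ℕ) (hP : P.totalDegree ≤ n) (m : Fin 2 →₀ ℕ)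
    (hm : m ∈ P.support) : m 0 + m 1 ≤ n := by
  have := (MvPolynomial.le_totalDegree hm).trans hP
  rw [Finsupp.sum_fintype _ _ (by simp)] at this
  simpa using this

lemma specP_natDegree (P : MvPolynomial (Fin 2) ℂ) (n : ℕ) (hP : P.totalDegree ≤ n) (w : ℂ) :
    (specP P w).natDegree ≤ n := by
  refine natDegree_sum_le_of_forall_le _ _ fun m hm => ?_
  refine (natDegree_C_mul_X_pow_le _ _).trans ?_
  have := supp_le P n hP m hm
  omega

lemma specP_coeff_mem (d : ℕ) (P : MvPolynomial (Fin 2) ℂ) (n : ℕ) (hP : P.totalDegree ≤ n) (k : ℕ) :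
    (fun u => (specP P (Complex.exp u)).coeff k) ∈ Efil d (n - k) := by
  have e : (fun u => (specP P (Complex.exp u)).coeff k) = ∑ m ∈ P.support,
      (if k = m 0 then P.coeff m else 0) • (fun u : ℂ => u ^ 0 * Complex.exp ((m 1 : ℕ) * u)) := by
    funext u
    simp only [specP, finsetSum_coeff, coeff_C_mul, coeff_X_pow, Finset.sum_apply, Pi.smul_apply]
    refine Finset.sum_congr rfl fun m _ => ?_
    rw [Complex.exp_nat_mul]
    split_ifs <;> simp
  rw [e]
  refine Submodule.sum_mem _ fun m hm => ?_
  by_cases h : k = m 0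
  · refine Submodule.smul_mem _ _ (Efil_basic 0 (m 1) ?_)
    have := supp_le P n hP m hm
    push_cast
    omega
  · simp [h]

lemma tcoeff_mem (t : ℂ[X]) (k : ℕ) (hk : k ≤ t.natDegree) :
    (fun u => (t - C u).coeff k) ∈ Efil t.natDegree (t.natDegree - k) := by
  have e : (fun u => (t - C u).coeff k) = (fun _ => t.coeff k) -
     (if k = 0 then (1:ℂ) else 0) • (fun u : ℂ => u ^ 1 * Complex.exp ((0:ℕ) * u)) := by
    funext u
    by_cases h : k = 0 <;> simp [coeff_C, h]
  rw [e]
  refine Submodule.sub_mem _ (Efil_const (by omega) _) ?_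
  by_cases h : k = 0
  · subst h
    exact Submodule.smul_mem _ _ (Efil_basic 1 0 (by simp))
  · simp [h]

lemma normQ_mem (t : ℂ[X]) (P : MvPolynomial (Fin 2) ℂ) (n : ℕ) (ht : 1 ≤ t.natDegree) (hP : P.totalDegree ≤ n) :
    (fun u => t.leadingCoeff ^ n *
      ((t - C u).roots.map (fun z => MvPolynomial.eval ![z, Complex.exp (t.eval z)] P)).prod)
      ∈ Efil t.natDegree (t.natDegree * n) := by
  have h := resultant_mem t.natDegree n (fun u => t - C u) (fun u => specP P (Complex.exp u))
    (fun k hk => tcoeff_mem t k hk) (fun k _ => specP_coeff_mem _ P n hP k)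
  convert h using 1
  funext u
  have hd : (t - C u).natDegree = t.natDegree := natDegree_sub_C
  have hl : (t - C u).leadingCoeff = t.leadingCoeff :=
    leadingCoeff_sub_of_degree_lt (lt_of_le_of_lt degree_C_le (natDegree_pos_iff_degree_pos.1 ht))
  have h2 := resultant_eq_prod_eval (t - C u) (specP P (Complex.exp u)) n (specP_natDegree P n hP _)
    (IsAlgClosed.splits _)
  rw [hd, hl] at h2
  rw [h2]
  congr 2
  refine Multiset.map_congr rfl fun z hz => ?_
  have hz' : t.eval z = u := by
    have := isRoot_of_mem_roots hz
    simpa [sub_eq_zero] using this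
  rw [specP_eval, hz']

/-- The entire function `u^a e^{βu}`. -/
noncomputable def emono (a : ℕ) (β : ℂ) : EntFun :=
  ⟨fun u => u ^ a * Complex.exp (β * u), by
    change Differentiable ℂ (fun u : ℂ => u ^ a * Complex.exp (β * u))
    fun_prop⟩

lemma emono_kill (a : ℕ) (β : ℂ) : aeval Dop ((X - C β) ^ (a + 1)) (emono a β) = 0 := by
  have hd : ∀ (a : ℕ) (u : ℂ), HasDerivAt (fun u : ℂ => u ^ a * Complex.exp (β * u))
      ((a : ℂ) * u ^ (a-1) * Complex.exp (β * u) + u ^ a * (Complex.exp (β * u) * (β * 1))) u := by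
    intro a u
    exact (hasDerivAt_pow a u).mul (((hasDerivAt_id u).const_mul β).cexp)
  induction a with
  | zero =>
    ext u
    have := (hd 0 u).deriv
    simp only [zero_add, pow_one, map_sub, aeval_X, aeval_C]
    change deriv (fun u : ℂ => u ^ 0 * Complex.exp (β * u)) u - β * (u ^ 0 * Complex.exp (β * u)) = 0
    rw [this]; simp; ring
  | succ a ih =>
    rw [pow_succ, map_mul, Module.End.mul_apply]
    have e : aeval Dop (X - C β) (emono (a+1) β) = ((a + 1 : ℕ) : ℂ) • emono a β := by
      ext u
      have := (hd (a+1) u).deriv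
      simp only [map_sub, aeval_X, aeval_C]
      change deriv (fun u : ℂ => u ^ (a+1) * Complex.exp (β * u)) u - β * (u ^ (a+1) * Complex.exp (β * u))
        = ((a + 1 : ℕ) : ℂ) * (u ^ a * Complex.exp (β * u))
      rw [this]; simp; ring
    rw [e, map_smul, ih, smul_zero]

lemma exists_list (d n : ℕ) (hd : 1 ≤ d) (hn : 1 ≤ n) (Q : ℂ → ℂ) (hQ : Q ∈ Efil d (d * n)) :
    ∃ (L : List ℂ) (F : EntFun), (∀ w ∈ L, ‖w‖ ≤ (d * n : ℝ) / 2) ∧ L.length ≤ 2 * (d * n ^ 2) + 1 ∧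
      (∀ u, (F : ℂ → ℂ) u = Complex.exp (-((d * n : ℂ) / 2) * u) * Q u) ∧
      aeval Dop (L.map (fun w => X - C w)).prod F = 0 := by
  let wt : ℕ → ℂ := fun b => (b : ℂ) - (d * n : ℂ) / 2
  let mult : ℕ → ℕ := fun b => (d * n - b) / d + 1
  let L : List ℂ := (List.range (d * n + 1)).flatMap fun b => List.replicate (mult b) (wt b)
  have hprod : (L.map (fun w => X - C w)).prod =
      ∏ b ∈ Finset.range (d * n + 1), (X - C (wt b)) ^ mult b := by
    have : ∀ k, (((List.range k).flatMap fun b => List.replicate (mult b) (wt b)).map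
        (fun w => X - C w)).prod = ∏ b ∈ Finset.range k, (X - C (wt b)) ^ mult b := by
      intro k
      induction k with
      | zero => simp
      | succ k ih =>
        rw [List.range_succ, List.flatMap_append, List.map_append, List.prod_append, ih,
          Finset.prod_range_succ]
        simp
    exact this _
  have hlen : L.length = ∑ b ∈ Finset.range (d * n + 1), mult b := by
    have : ∀ k, ((List.range k).flatMap fun b => List.replicate (mult b) (wt b)).length
        = ∑ b ∈ Finset.range k, mult b := by
      intro k
      induction k with
      | zero => simp
      | succ k ih =>
        rw [List.range_succ, List.flatMap_append, List.length_append, ih, Finset.sum_range_succ]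
        simp
    exact this _
  have hkill : ∀ Q ∈ Efil d (d * n), ∃ F : EntFun,
      (∀ u, (F : ℂ → ℂ) u = Complex.exp (-((d * n : ℂ) / 2) * u) * Q u) ∧
      aeval Dop (L.map (fun w => X - C w)).prod F = 0 := by
    intro Q hQ
    induction hQ using Submodule.span_induction with
    | mem Q h =>
      obtain ⟨a, b, hab, rfl⟩ := h
      refine ⟨emono a (wt b), ?_, ?_⟩
      · intro u
        change u ^ a * Complex.exp (((b : ℂ) - (d * n : ℂ) / 2) * u) = _
        rw [show ((b : ℂ) - (d * n : ℂ) / 2) * u = -((d * n : ℂ) / 2) * u + b * u by ring, Complex.exp_add]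
        ring
      · have hab' : d * a + b ≤ d * n := by exact_mod_cast hab
        have h1 : a + 1 ≤ mult b := by
          have : a ≤ (d * n - b) / d := by
            rw [Nat.le_div_iff_mul_le (by omega), mul_comm]; omega
          simp only [mult]; omega
        have h2 : (X - C (wt b)) ^ (a+1) ∣ (L.map (fun w => X - C w)).prod := by
          rw [hprod]
          refine (pow_dvd_pow _ h1).trans
            (Finset.dvd_prod_of_mem (fun b => (X - C (wt b)) ^ mult b) ?_)
          simp; omega
        obtain ⟨q, hq⟩ := h2
        rw [hq, mul_comm, map_mul, Module.End.mul_apply, emono_kill, map_zero]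
    | zero => exact ⟨0, by simp, by simp⟩
    | add Q R _ _ hQ hR =>
      obtain ⟨F, hF, hF'⟩ := hQ
      obtain ⟨G, hG, hG'⟩ := hR
      refine ⟨F + G, fun u => ?_, by rw [map_add, hF', hG', add_zero]⟩
      have : ((F + G : EntFun) : ℂ → ℂ) u = (F : ℂ → ℂ) u + (G : ℂ → ℂ) u := rfl
      rw [this, hF, hG, Pi.add_apply]; ring
    | smul c Q _ hQ =>
      obtain ⟨F, hF, hF'⟩ := hQ
      refine ⟨c • F, fun u => ?_, by rw [map_smul, hF', smul_zero]⟩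
      have : ((c • F : EntFun) : ℂ → ℂ) u = c * (F : ℂ → ℂ) u := rfl
      rw [this, hF, Pi.smul_apply, smul_eq_mul]; ring
  obtain ⟨F, hF, hF'⟩ := hkill Q hQ
  refine ⟨L, F, ?_, ?_, hF, hF'⟩
  · intro w hw
    simp only [L, List.mem_flatMap, List.mem_range, List.mem_replicate] at hw
    obtain ⟨b, hb, -, rfl⟩ := hw
    have hb' : (b : ℝ) ≤ d * n := by exact_mod_cast Nat.lt_succ_iff.1 hb
    have e : wt b = (((b : ℝ) - (d * n : ℝ) / 2 : ℝ) : ℂ) := by simp [wt]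
    rw [e, Complex.norm_real, Real.norm_eq_abs, abs_le]
    have : (0:ℝ) ≤ b := b.cast_nonneg
    constructor <;> linarith
  · rw [hlen, Finset.sum_range_succ']
    have h1 : ∑ b ∈ Finset.range (d * n), mult (b + 1) ≤ ∑ b ∈ Finset.range (d * n), n := by
      refine Finset.sum_le_sum fun b hb => ?_
      have hb : b < d * n := by simpa using hb
      have : (d * n - (b+1)) / d < n := by
        rw [Nat.div_lt_iff_lt_mul (by omega), mul_comm n d]; omega
      simp only [mult]; omega
    have h2 : mult 0 = n + 1 := by
      simp only [mult, Nat.sub_zero]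
      rw [Nat.mul_div_cancel_left _ (by omega)]
    simp only [Finset.sum_const, Finset.card_range, smul_eq_mul] at h1
    rw [h2]
    nlinarith [Nat.mul_le_mul hd hn, Nat.mul_le_mul_right n (Nat.mul_le_mul hd hn)]

lemma entire_div (F : ℂ → ℂ) (hF : Differentiable ℂ F) (a : ℂ) (ha : F a = 0) :
    ∃ G : ℂ → ℂ, Differentiable ℂ G ∧ ∀ z, F z = (z - a) * G z := by
  refine ⟨dslope F a, ?_, fun z => ?_⟩
  · rw [← differentiableOn_univ]
    exact (Complex.differentiableOn_dslope Filter.univ_mem).2 hF.differentiableOn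
  · have := sub_smul_dslope F a z
    rw [ha, sub_zero, smul_eq_mul] at this
    exact this.symm

lemma entire_div_finset (s : Finset ℂ) (F : ℂ → ℂ) (hF : Differentiable ℂ F) (hs : ∀ a ∈ s, F a = 0) :
    ∃ G : ℂ → ℂ, Differentiable ℂ G ∧ ∀ z, F z = (∏ a ∈ s, (z - a)) * G z := by
  induction s using Finset.induction_on with
  | empty => exact ⟨F, hF, by simp⟩
  | insert a s ha ih =>
    obtain ⟨G, hG, hFG⟩ := ih fun b hb => hs b (by simp [hb])
    have h0 : G a = 0 := by
      have h := hs a (by simp)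
      rw [hFG, mul_eq_zero] at h
      refine h.resolve_left ?_
      refine Finset.prod_ne_zero_iff.2 ?_
      intro b hb h
      rw [sub_eq_zero] at h
      exact ha (h ▸ hb)
    obtain ⟨H, hH, hGH⟩ := entire_div G hG a h0
    refine ⟨H, hH, fun z => ?_⟩
    rw [hFG, hGH, Finset.prod_insert ha]; ring

lemma entire_div_family {ι : Type*} (s : Finset ι) (p : ι → ℂ) (r K : ℝ)
    (hp : ∀ i ∈ s, p i ∈ Metric.ball (0:ℂ) r) :
    ∀ (F : ℂ → ℂ), Differentiable ℂ F →
    (∀ u ∈ Metric.ball (0:ℂ) r, ‖F u‖ ≤ K * ∏ i ∈ s, ‖u - p i‖) →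
    ∃ H : ℂ → ℂ, Differentiable ℂ H ∧ ∀ z, F z = (∏ i ∈ s, (z - p i)) * H z := by
  classical
  induction s using Finset.induction_on with
  | empty => exact fun F hF _ => ⟨F, hF, by simp⟩
  | insert a s ha ih =>
    intro F hF hb
    have h0 : F (p a) = 0 := by
      have := hb (p a) (hp a (by simp))
      rw [Finset.prod_insert ha] at this
      simpa using this
    obtain ⟨G, hG, hFG⟩ := entire_div F hF (p a) h0
    have hbG : ∀ u ∈ Metric.ball (0:ℂ) r, u ≠ p a → ‖G u‖ ≤ K * ∏ i ∈ s, ‖u - p i‖ := by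
      intro u hu hne
      have h1 := hb u hu
      rw [hFG, norm_mul, Finset.prod_insert ha] at h1
      have h2 : 0 < ‖u - p a‖ := norm_pos_iff.2 (sub_ne_zero.2 hne)
      refine le_of_mul_le_mul_left (h1.trans (le_of_eq ?_)) h2
      ring
    have hbG' : ∀ u ∈ Metric.ball (0:ℂ) r, ‖G u‖ ≤ K * ∏ i ∈ s, ‖u - p i‖ := by
      intro u hu
      by_cases hne : u = p a
      · have hc1 : Filter.Tendsto (fun x => ‖G x‖) (nhdsWithin u {u}ᶜ) (nhds ‖G u‖) :=
          (hG.continuous.norm.tendsto u).mono_left nhdsWithin_le_nhds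
        have hc : Continuous (fun x : ℂ => K * ∏ i ∈ s, ‖x - p i‖) := by fun_prop
        have hc2 : Filter.Tendsto (fun x : ℂ => K * ∏ i ∈ s, ‖x - p i‖) (nhdsWithin u {u}ᶜ)
            (nhds (K * ∏ i ∈ s, ‖u - p i‖)) :=
          (hc.tendsto u).mono_left nhdsWithin_le_nhds
        refine le_of_tendsto_of_tendsto hc1 hc2 ?_
        filter_upwards [mem_nhdsWithin_of_mem_nhds (Metric.isOpen_ball.mem_nhds hu),
          self_mem_nhdsWithin] with x hx hx'
        exact hbG x hx (fun h => hx' (by simp [h, hne]))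
      · exact hbG u hu hne
    obtain ⟨H, hH, hGH⟩ := ih (fun i hi => hp i (by simp [hi])) G hG hbG'
    refine ⟨H, hH, fun z => ?_⟩
    rw [hFG, hGH, Finset.prod_insert ha]; ring

lemma blaschke {ι : Type*} (s : Finset ι) (p : ι → ℂ) (ρ K : ℝ) (hρ : 0 < ρ)
    (hp : ∀ i ∈ s, ‖p i‖ ≤ ρ) (H : ℂ → ℂ) (hH : Differentiable ℂ H)
    (hK : ∀ v : ℂ, ‖v‖ ≤ 9 * ρ → ‖(∏ i ∈ s, (v - p i)) * H v‖ ≤ K) (u : ℂ) (hu : ‖u‖ ≤ ρ) :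
    (40 / 9 : ℝ) ^ s.card * ‖(∏ i ∈ s, (u - p i)) * H u‖ ≤ K := by
  let W : ℂ → ℂ := fun v => (∏ i ∈ s, (81 * ρ ^ 2 - (starRingEnd ℂ) (p i) * v) / (9 * ρ)) * H v
  have hW : Differentiable ℂ W := by
    have : Differentiable ℂ (fun v => ∏ i ∈ s, (81 * (ρ:ℂ) ^ 2 - (starRingEnd ℂ) (p i) * v) / (9 * ρ)) := by
      fun_prop
    exact this.mul hH
  have hn9 : ‖(9 * ρ : ℂ)‖ = 9 * ρ := by
    rw [norm_mul, Complex.norm_real, Real.norm_of_nonneg hρ.le]; norm_num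
  have hWu : ‖W u‖ ≤ K := by
    refine Complex.norm_le_of_forall_mem_frontier_norm_le (U := Metric.ball (0:ℂ) (9*ρ))
      Metric.isBounded_ball hW.diffContOnCl ?_ ?_
    · intro v hv
      rw [frontier_ball (0:ℂ) (by positivity : 9 * ρ ≠ 0)] at hv
      have hv : ‖v‖ = 9 * ρ := by simpa using hv
      refine le_trans (le_of_eq ?_) (hK v hv.le)
      simp only [W]
      rw [norm_mul, norm_mul, norm_prod, norm_prod]
      congr 1
      refine Finset.prod_congr rfl fun i _ => ?_
      have e : (81 * (ρ:ℂ) ^ 2 - (starRingEnd ℂ) (p i) * v) = v * (starRingEnd ℂ) (v - p i) := by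
        rw [map_sub, mul_sub, Complex.mul_conj, Complex.normSq_eq_norm_sq, hv]
        push_cast; ring
      rw [norm_div, hn9, e, norm_mul, hv, Complex.norm_conj]
      field_simp
    · apply subset_closure
      simp; linarith
  refine le_trans ?_ hWu
  simp only [W]
  rw [norm_mul, norm_mul, norm_prod, norm_prod, ← mul_assoc, ← Finset.prod_const, ← Finset.prod_mul_distrib]
  refine mul_le_mul_of_nonneg_right ?_ (norm_nonneg _)
  refine Finset.prod_le_prod (fun i _ => by positivity) fun i hi => ?_
  rw [norm_div, hn9, le_div_iff₀ (by positivity)]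
  have h1 : ‖u - p i‖ ≤ 2 * ρ := (norm_sub_le _ _).trans (by linarith [hp i hi])
  have h2 : 80 * ρ ^ 2 ≤ ‖81 * (ρ:ℂ) ^ 2 - (starRingEnd ℂ) (p i) * u‖ := by
    have h3 := norm_sub_norm_le (81 * (ρ:ℂ) ^ 2) ((starRingEnd ℂ) (p i) * u)
    have h4 : ‖(81 * (ρ:ℂ) ^ 2)‖ = 81 * ρ ^ 2 := by
      rw [norm_mul, norm_pow, Complex.norm_real, Real.norm_of_nonneg hρ.le]; norm_num
    have h5 : ‖(starRingEnd ℂ) (p i) * u‖ ≤ ρ * ρ := by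
      rw [norm_mul, Complex.norm_conj]
      have := hp i hi
      gcongr
    rw [h4] at h3
    nlinarith
  nlinarith

lemma bernstein_disc (t : ℂ[X]) (z₀ : ℂ) (R₀ R M : ℝ) (h0 : 0 < R₀) (hR : R₀ ≤ R)
    (hM : ∀ z ∈ Metric.closedBall z₀ R₀, ‖t.eval z‖ ≤ M) (z : ℂ) (hz : z ∈ Metric.closedBall z₀ R) :
    ‖t.eval z‖ ≤ (R / R₀) ^ t.natDegree * M := by
  have hM0 : 0 ≤ M := (norm_nonneg _).trans (hM z₀ (by simp [h0.le]))
  by_cases hz0 : z ∈ Metric.closedBall z₀ R₀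
  · refine (hM z hz0).trans ?_
    have : 1 ≤ (R / R₀) ^ t.natDegree := one_le_pow₀ ((one_le_div h0).2 hR)
    nlinarith
  set s : ℂ[X] := t.comp (X + C z₀) with hs
  have hsd : s.natDegree = t.natDegree := by simp [hs, natDegree_comp]
  have hse : ∀ y, s.eval y = t.eval (y + z₀) := by intro y; simp [hs]
  have hrev : ∀ y : ℂ, y ≠ 0 → s.reverse.eval y⁻¹ * y ^ t.natDegree = t.eval (y + z₀) := by
    intro y hy
    let _ := invertibleOfNonzero hy
    have := eval₂_reverse_mul_pow (RingHom.id ℂ) y s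
    rw [invOf_eq_inv, hsd] at this
    rw [← hse]
    simpa [eval₂_id] using! this
  have hbd : ∀ x ∈ Metric.closedBall (0:ℂ) R₀⁻¹, ‖s.reverse.eval x‖ ≤ M / R₀ ^ t.natDegree := by
    intro x hx
    refine Complex.norm_le_of_forall_mem_frontier_norm_le (U := Metric.ball (0:ℂ) R₀⁻¹)
      Metric.isBounded_ball s.reverse.differentiable.diffContOnCl ?_ ?_
    · intro v hv
      rw [frontier_ball (0:ℂ) (by positivity)] at hv
      have hv : ‖v‖ = R₀⁻¹ := by simpa using hv
      have hv0 : v ≠ 0 := by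
        intro h; rw [h, norm_zero] at hv
        have : 0 < R₀⁻¹ := by positivity
        linarith
      have h1 := hrev v⁻¹ (inv_ne_zero hv0)
      rw [inv_inv] at h1
      have h2 := hM (v⁻¹ + z₀) (by simp [hv])
      rw [← h1, norm_mul, norm_pow, norm_inv, hv, inv_inv] at h2
      rw [le_div_iff₀ (by positivity)]
      exact h2
    · rw [closure_ball _ (by positivity)]; exact hx
  have hy : R₀ < ‖z - z₀‖ := by simpa [dist_eq_norm] using hz0
  have hy' : ‖z - z₀‖ ≤ R := by simpa [dist_eq_norm] using hz
  have hy0 : z - z₀ ≠ 0 := norm_pos_iff.1 (h0.trans hy)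
  have h1 := hrev (z - z₀) hy0
  rw [sub_add_cancel] at h1
  rw [← h1, norm_mul, norm_pow]
  have h2 := hbd (z - z₀)⁻¹ (by
    rw [mem_closedBall_zero_iff, norm_inv]
    exact inv_anti₀ h0 hy.le)
  calc _ ≤ M / R₀ ^ t.natDegree * R ^ t.natDegree := by gcongr
    _ = _ := by rw [div_pow]; ring

lemma numeric (m N x : ℕ) (y : ℝ) (hx : 1 ≤ x) (hy : 0 ≤ y) (hN : N ≤ 2 * x + 1)
    (h : (40 / 9 : ℝ) ^ m ≤ Real.exp (5 * y) * (9 ^ N / 8)) : (m : ℝ) ≤ 4 * (x + y) := by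
  have h1 : (40 / 9 : ℝ) ^ m ≤ Real.exp (5 * y) * (9 ^ (2 * x + 1) / 8) := by
    refine h.trans ?_
    gcongr
    norm_num
  have h2 := Real.log_le_log (by positivity) h1
  rw [Real.log_mul (by positivity) (by positivity), Real.log_exp, Real.log_pow,
    Real.log_div (x := 9 ^ (2 * x + 1)) (by positivity) (by norm_num), Real.log_pow] at h2
  push_cast at h2
  have hq5 : 5 ≤ 4 * Real.log (40 / 9) := by
    have : (4:ℝ) * Real.log (40 / 9) = Real.log ((40/9) ^ 4) := by rw [Real.log_pow]; norm_num
    rw [this, Real.le_log_iff_exp_le (by positivity)]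
    have e : Real.exp 5 = Real.exp 1 ^ 5 := by rw [← Real.exp_nat_mul]; norm_num
    rw [e]
    have := Real.exp_one_lt_d9
    calc Real.exp 1 ^ 5 ≤ (2.7182818286:ℝ) ^ 5 := by gcongr
      _ ≤ _ := by norm_num
  have hq9 : 3 * Real.log 9 - Real.log 8 ≤ 4 * Real.log (40 / 9) := by
    have e1 : (4:ℝ) * Real.log (40 / 9) = Real.log ((40/9) ^ 4) := by rw [Real.log_pow]; norm_num
    have e2 : 3 * Real.log 9 - Real.log 8 = Real.log (9 ^ 3 / 8) := by
      rw [Real.log_div (by norm_num) (by norm_num), Real.log_pow]; norm_num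
    rw [e1, e2]
    exact Real.log_le_log (by norm_num) (by norm_num)
  have h98 : Real.log 8 ≤ Real.log 9 := Real.log_le_log (by norm_num) (by norm_num)
  have hx' : (1:ℝ) ≤ x := by exact_mod_cast hx
  set q := Real.log (40 / 9)
  have h3 : (m : ℝ) * q ≤ 4 * (x + y) * q := by
    nlinarith [mul_le_mul_of_nonneg_left hq5 hy, mul_le_mul_of_nonneg_left hq9 (by linarith : (0:ℝ) ≤ x),
      mul_nonneg (by linarith : (0:ℝ) ≤ (x:ℝ) - 1) (by linarith : 0 ≤ Real.log 9 - Real.log 8)]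
  exact le_of_mul_le_mul_right h3 (by linarith)

lemma zeros_finite (f : ℂ → ℂ) (hf : Differentiable ℂ f) (hne : ∃ z, f z ≠ 0) (c : ℂ) (r : ℝ) :
    {z | z ∈ Metric.closedBall c r ∧ f z = 0}.Finite := by
  by_contra hinf
  have hinf : {z | z ∈ Metric.closedBall c r ∧ f z = 0}.Infinite := hinf
  obtain ⟨x, -, hx⟩ := hinf.exists_accPt_of_subset_isCompact (isCompact_closedBall c r) (fun z hz => hz.1)
  rw [accPt_iff_frequently_nhdsNE] at hx
  have han : AnalyticOnNhd ℂ f Set.univ := hf.differentiableOn.analyticOnNhd isOpen_univ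
  have h0 := han.eqOn_zero_of_preconnected_of_frequently_eq_zero isPreconnected_univ (Set.mem_univ x)
    (hx.mono fun z hz => hz.2)
  obtain ⟨z, hz⟩ := hne
  exact hz (h0 (Set.mem_univ z))

lemma preimage_bdd (t : ℂ[X]) (ht : 1 ≤ t.natDegree) (r : ℝ) :
    ∃ B : ℝ, ∀ z : ℂ, ‖t.eval z‖ ≤ r → z ∈ Metric.closedBall (0:ℂ) B := by
  have h := t.tendsto_norm_atTop (natDegree_pos_iff_degree_pos.1 ht) (l := Bornology.cobounded ℂ)
    (z := id) tendsto_norm_cobounded_atTop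
  have h2 := h.eventually_gt_atTop r
  rw [Filter.eventually_iff, ← Bornology.isCobounded_def, ← Bornology.isBounded_compl_iff] at h2
  obtain ⟨B, hB⟩ := h2.subset_closedBall 0
  refine ⟨B, fun z hz => hB ?_⟩
  simpa using hz

lemma norm_multiset_prod (R : Multiset ℂ) (f : ℂ → ℂ) :
    ‖(R.map f).prod‖ = (R.map fun z => ‖f z‖).prod := by
  induction R using Multiset.induction_on with
  | empty => simp
  | cons a R ih => simp [ih]

lemma multiset_prod_le (R : Multiset ℂ) (f : ℂ → ℝ) (K : ℝ) (h0 : ∀ z ∈ R, 0 ≤ f z)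
    (h : ∀ z ∈ R, f z ≤ K) : 0 ≤ (R.map f).prod ∧ (R.map f).prod ≤ K ^ R.card := by
  induction R using Multiset.induction_on with
  | empty => simp
  | cons a R ih =>
    have ih := ih (fun z hz => h0 z (by simp [hz])) (fun z hz => h z (by simp [hz]))
    have h1 := h0 a (by simp)
    have h2 := h a (by simp)
    simp only [Multiset.map_cons, Multiset.prod_cons, Multiset.card_cons, pow_succ']
    exact ⟨mul_nonneg h1 ih.1, mul_le_mul h2 ih.2 ih.1 (h1.trans h2)⟩

lemma normprod_bound (t : ℂ[X]) (ht : 1 ≤ t.natDegree) (s : Finset ℂ) (f g : ℂ → ℂ)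
    (hg : Continuous g) (hfg : ∀ z, f z = (∏ a ∈ s, (z - a)) * g z) (r : ℝ) :
    ∃ K : ℝ, 0 ≤ K ∧ ∀ u : ℂ, ‖u‖ ≤ r →
      ‖((t - C u).roots.map f).prod‖ ≤ K * ∏ a ∈ s, ‖u - t.eval a‖ := by
  obtain ⟨B, hB⟩ := preimage_bdd t ht r
  obtain ⟨K₀, hK₀⟩ := (isCompact_closedBall (0:ℂ) B).exists_bound_of_continuousOn hg.continuousOn
  have hl0 : 0 < ‖t.leadingCoeff‖ := by
    rw [norm_pos_iff, leadingCoeff_ne_zero]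
    rintro rfl; simp at ht
  set K₁ := max K₀ 0
  refine ⟨K₁ ^ t.natDegree * (‖t.leadingCoeff‖⁻¹) ^ s.card, by positivity, fun u hu => ?_⟩
  have hl : (t - C u).leadingCoeff = t.leadingCoeff :=
    leadingCoeff_sub_of_degree_lt (lt_of_le_of_lt degree_C_le (natDegree_pos_iff_degree_pos.1 ht))
  have hcard : (t - C u).roots.card = t.natDegree := by
    rw [splits_iff_card_roots.1 (IsAlgClosed.splits (t - C u)), natDegree_sub_C]
  have hroot : ∀ z ∈ (t - C u).roots, t.eval z = u := by
    intro z hz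
    have := isRoot_of_mem_roots hz
    simpa [sub_eq_zero] using this
  rw [norm_multiset_prod]
  have e1 : ((t - C u).roots.map fun z => ‖f z‖) =
      ((t - C u).roots.map fun z => (∏ a ∈ s, ‖z - a‖) * ‖g z‖) := by
    refine Multiset.map_congr rfl fun z _ => ?_
    rw [hfg, norm_mul, norm_prod]
  rw [e1, Multiset.prod_map_mul]
  have e2 : ∀ a, ((t - C u).roots.map fun z => ‖z - a‖).prod = ‖t.leadingCoeff‖⁻¹ * ‖u - t.eval a‖ := by
    intro a
    have h := (IsAlgClosed.splits (t - C u)).eval_eq_prod_roots a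
    have h' := congrArg norm h
    rw [norm_mul, norm_multiset_prod, hl] at h'
    simp only [eval_sub, eval_C] at h'
    rw [norm_sub_rev, h', ← mul_assoc, inv_mul_cancel₀ hl0.ne', one_mul]
    congr 1
    exact Multiset.map_congr rfl fun z _ => norm_sub_rev _ _
  have e3 : ((t - C u).roots.map fun z => ∏ a ∈ s, ‖z - a‖).prod =
      ∏ a ∈ s, ((t - C u).roots.map fun z => ‖z - a‖).prod := by
    exact Multiset.prod_map_prod_map _ s.val
  rw [e3]
  simp only [e2, Finset.prod_mul_distrib, Finset.prod_const]
  have h4 := (multiset_prod_le (t - C u).roots (fun z => ‖g z‖) K₁ (fun z _ => norm_nonneg _)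
    (fun z hz => (hK₀ z (hB z (by rw [hroot z hz]; exact hu))).trans (le_max_left _ _))).2
  rw [hcard] at h4
  calc _ ≤ (‖t.leadingCoeff‖⁻¹ ^ s.card * ∏ a ∈ s, ‖u - t.eval a‖) * K₁ ^ t.natDegree := by
        gcongr
    _ = _ := by ring

lemma f_diff (t : ℂ[X]) (P : MvPolynomial (Fin 2) ℂ) :
    Differentiable ℂ (fun z => MvPolynomial.eval ![z, Complex.exp (t.eval z)] P) := by
  simp only [MvPolynomial.eval_eq', Fin.prod_univ_two, Matrix.cons_val_zero, Matrix.cons_val_one]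
  have := t.differentiable
  fun_prop

lemma zero_count (t : ℂ[X]) (ht : 1 ≤ t.natDegree) (n : ℕ) (hn : 1 ≤ n) (P : MvPolynomial (Fin 2) ℂ)
    (hP : P.totalDegree ≤ n) (hne : ∃ z : ℂ, MvPolynomial.eval ![z, Complex.exp (t.eval z)] P ≠ 0)
    (ρ : ℝ) (hρ : 0 < ρ) (s : Finset ℂ) (hs : ∀ z ∈ s, ‖t.eval z‖ ≤ ρ)
    (hs0 : ∀ z ∈ s, MvPolynomial.eval ![z, Complex.exp (t.eval z)] P = 0) :
    (s.card : ℝ) ≤ 4 * ((t.natDegree : ℝ) * (n : ℝ) ^ 2 + (t.natDegree : ℝ) * n * ρ) := by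
  set f : ℂ → ℂ := fun z => MvPolynomial.eval ![z, Complex.exp (t.eval z)] P with hf
  set d := t.natDegree with hd
  have hfd : Differentiable ℂ f := f_diff t P
  have hl0 : t.leadingCoeff ≠ 0 := by
    rw [leadingCoeff_ne_zero]
    rintro rfl; simp [hd] at ht
  obtain ⟨L, F, hLw, hLl, hF, hkill⟩ := exists_list d n ht hn _ (normQ_mem t P n ht hP)
  -- factor `f`
  obtain ⟨g, hg, hfg⟩ := entire_div_finset s f hfd hs0
  obtain ⟨K, hK0, hK⟩ := normprod_bound t ht s f g hg.continuous hfg (10 * ρ)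
  obtain ⟨K₁, hK₁⟩ := (isCompact_closedBall (0:ℂ) (10*ρ)).exists_bound_of_continuousOn
    (f := fun u : ℂ => Complex.exp (-((d * n : ℂ) / 2) * u)) (by fun_prop)
  obtain ⟨H, hH, hFH⟩ := entire_div_family s (fun a => t.eval a) (10 * ρ)
    (K₁ * ‖t.leadingCoeff‖ ^ n * K)
    (fun a ha => by have := hs a ha; rw [mem_ball_zero_iff]; linarith) F (ent_diff F) (by
      intro u hu
      have hu : ‖u‖ ≤ 10 * ρ := (mem_ball_zero_iff.1 hu).le
      have h1 := hK₁ u (by simpa using hu)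
      rw [hF, norm_mul, norm_mul, norm_pow]
      calc _ ≤ K₁ * (‖t.leadingCoeff‖ ^ n * (K * ∏ a ∈ s, ‖u - t.eval a‖)) := by
            have h2 := hK u hu
            have h3 : 0 ≤ K₁ := (norm_nonneg _).trans h1
            refine mul_le_mul h1 ?_ (by positivity) h3
            exact mul_le_mul_of_nonneg_left h2 (by positivity)
        _ = _ := by ring)
  -- maximum
  obtain ⟨u₀, hu₀, hmax⟩ := (isCompact_closedBall (0:ℂ) ρ).exists_isMaxOn
    ⟨0, by simp [hρ.le]⟩ (ent_diff F).continuous.norm.continuousOn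
  set M := ‖(F : ℂ → ℂ) u₀‖ with hM
  have hMb : ∀ z ∈ Metric.closedBall (0:ℂ) ρ, ‖(F : ℂ → ℂ) z‖ ≤ M := fun z hz => hmax hz
  have hM0 : 0 < M := by
    by_contra hcon
    have hF0 : ∀ z ∈ Metric.closedBall (0:ℂ) ρ, (F : ℂ → ℂ) z = 0 := fun z hz =>
      norm_le_zero_iff.1 ((hMb z hz).trans (not_lt.1 hcon))
    obtain ⟨B, hB⟩ := preimage_bdd t ht ρ
    have hfin := (zeros_finite f hfd hne 0 B).image (fun z => t.eval z)
    have hsub : Metric.closedBall (0:ℂ) ρ ⊆ (fun z => t.eval z) ''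
        {z | z ∈ Metric.closedBall (0:ℂ) B ∧ f z = 0} := by
      intro u hu
      have h1 := hF0 u hu
      rw [hF] at h1
      have h2 : ((t - C u).roots.map f).prod = 0 := by
        simpa [hl0] using h1
      rw [Multiset.prod_eq_zero_iff, Multiset.mem_map] at h2
      obtain ⟨z, hz, hz0⟩ := h2
      have hzu : t.eval z = u := by
        have := isRoot_of_mem_roots hz
        simpa [sub_eq_zero] using this
      exact ⟨z, ⟨hB z (by rw [hzu]; simpa using hu), hz0⟩, hzu⟩
    exact infinite_of_mem_nhds (0:ℂ) (Metric.closedBall_mem_nhds (0:ℂ) hρ) (hfin.subset hsub)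
  have hgrow := growth_max ((d * n : ℝ) / 2) ρ M (by positivity) hρ hM0.le L hLw F hkill hMb
  have hbl := blaschke s (fun a => t.eval a) ρ _ hρ hs H hH
    (fun v hv => by rw [← hFH]; exact hgrow v hv) u₀ (by simpa using hu₀)
  rw [← hFH, ← hM, mul_comm _ M] at hbl
  have hfinal := le_of_mul_le_mul_left hbl hM0
  have := numeric s.card L.length (d * n ^ 2) (d * n * ρ) (Nat.mul_pos ht (by positivity))
    (by positivity) hLl (by
      rw [show 5 * ((d:ℝ) * n * ρ) = 10 * ρ * (d * n / 2) by ring]; exact hfinal)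
  push_cast at this
  exact this


end Helpers


/-- Valency bound for `P(z, e^{t(z)})`: there is an absolute constant
`A ≤ 4` such that for every polynomial `t` of degree `d ≥ 1`, every disk
`{|z - z₀| ≤ R}` with `R ≥ R₀ > 0`, every `P` of total degree at most `n ≥ 1` and every
value `c` (not identically attained), the number of solutions of `P(z, e^{t(z)}) = c`
in the disk is at most `A (d n² + d n (R/R₀)^d max_{|z-z₀|≤R₀} |t(z)|)`. -/
theorem valency_bound_exponential_curve :
    ∃ A : ℝ, 0 < A ∧ A ≤ 4 ∧
      ∀ t : Polynomial ℂ, 1 ≤ t.natDegree →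
      ∀ z₀ : ℂ, ∀ R₀ R : ℝ, 0 < R₀ → R₀ ≤ R →
      ∀ n : ℕ, 1 ≤ n → ∀ P : MvPolynomial (Fin 2) ℂ, P.totalDegree ≤ n → ∀ c : ℂ,
        (∃ z : ℂ, MvPolynomial.eval ![z, Complex.exp (t.eval z)] P ≠ c) →
        ∃ S : Finset ℂ,
          (∀ z ∈ Metric.closedBall z₀ R,
            MvPolynomial.eval ![z, Complex.exp (t.eval z)] P = c → z ∈ S) ∧
          (S.card : ℝ) ≤ A * ((t.natDegree : ℝ) * (n : ℝ) ^ 2 +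
            (t.natDegree : ℝ) * (n : ℝ) * (R / R₀) ^ t.natDegree *
              sSup ((fun z : ℂ => ‖t.eval z‖) '' Metric.closedBall z₀ R₀)) := by
  refine ⟨4, by norm_num, le_rfl, ?_⟩
  intro t ht z₀ R₀ R h0 hR n hn P hP c hne
  set M := sSup ((fun z : ℂ => ‖t.eval z‖) '' Metric.closedBall z₀ R₀) with hM
  have hbdd : BddAbove ((fun z : ℂ => ‖t.eval z‖) '' Metric.closedBall z₀ R₀) :=
    ((isCompact_closedBall z₀ R₀).image (by fun_prop)).bddAbove
  have hMb : ∀ z ∈ Metric.closedBall z₀ R₀, ‖t.eval z‖ ≤ M := fun z hz =>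
    le_csSup hbdd ⟨z, hz, rfl⟩
  have hM0 : 0 < M := by
    by_contra hcon
    have ht0 : t ≠ 0 := by rintro rfl; simp at ht
    have hsub : Metric.closedBall z₀ R₀ ⊆ {z | t.IsRoot z} := fun z hz =>
      norm_le_zero_iff.1 ((hMb z hz).trans (not_lt.1 hcon))
    exact infinite_of_mem_nhds z₀ (Metric.closedBall_mem_nhds z₀ h0)
      ((Polynomial.finite_setOfPred_isRoot ht0).subset hsub)
  have hev : ∀ z : ℂ, MvPolynomial.eval ![z, Complex.exp (t.eval z)] (P - MvPolynomial.C c) =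
      MvPolynomial.eval ![z, Complex.exp (t.eval z)] P - c := by intro z; simp
  have hne' : ∃ z : ℂ, MvPolynomial.eval ![z, Complex.exp (t.eval z)] (P - MvPolynomial.C c) ≠ 0 := by
    obtain ⟨z, hz⟩ := hne
    exact ⟨z, by rw [hev]; exact sub_ne_zero.2 hz⟩
  have hfin := zeros_finite _ (f_diff t (P - MvPolynomial.C c)) hne' z₀ R
  have hR0 : 0 < R := h0.trans_le hR
  refine ⟨hfin.toFinset, fun z hz hzc => ?_, ?_⟩
  · rw [Set.Finite.mem_toFinset]
    exact ⟨hz, by rw [hev, hzc, sub_self]⟩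
  · have := zero_count t ht n hn (P - MvPolynomial.C c)
      ((MvPolynomial.totalDegree_sub_C_le P c).trans hP) hne' ((R / R₀) ^ t.natDegree * M)
      (by positivity) hfin.toFinset
      (fun z hz => bernstein_disc t z₀ R₀ R M h0 hR hMb z ((Set.Finite.mem_toFinset _).1 hz).1)
      (fun z hz => ((Set.Finite.mem_toFinset _).1 hz).2)
    rw [← mul_assoc] at this
    exact this
end

section
/- Let t ∈ ℂ[z] be a fixed polynomial. For every z₀ ∈ ℂ and all radii 0 < R₁ ≤ R₂ there is a constant C = C(t, z₀, R₁, R₂) ≥ 1 such that for every integer n ≥ 1 and every bivariate polynomial P ∈ ℂ[z,w] of total degree at most n with max_{|z−z₀|≤R₁} |P(z, e^{t(z)})| ≤ 1, one has |P(z, e^{t(z)})| ≤ C^{n²} for all z ∈ ℂ with |z−z₀| ≤ R₂. (Equivalently: the generalized Siciak extremal function Φ_K(z; V, φ) with K the closed disk of radius R₁ centred at z₀, V_n = {P(z,e^{t(z)}) : deg P ≤ n}, and exponent function φ(n) = n², is bounded on the disk of radius R₂ centred at z₀.) -/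
theorem lagr {n : ℕ} (p : Polynomial ℂ) (hp : p.natDegree ≤ n) (v : ℕ → ℂ) (x : ℂ) (D δ M : ℝ)
    (hδ : 0 < δ) (hD : ∀ i ≤ n, ‖x - v i‖ ≤ D) 
    (hs : ∀ i ≤ n, ∀ j ≤ n, i ≠ j → δ ≤ ‖v i - v j‖)
    (hM : ∀ i ≤ n, ‖p.eval (v i)‖ ≤ M) : ‖p.eval x‖ ≤ (n + 1) * (D / δ) ^ n * M := by
  have hinj : Set.InjOn v (Finset.range (n+1)) := by
    intro i hi j hj hij
    by_contra hne
    have := hs i (by simpa [Nat.lt_succ_iff] using hi) j (by simpa [Nat.lt_succ_iff] using hj) hne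
    rw [hij, sub_self, norm_zero] at this
    linarith
  have hdeg : p.degree < (Finset.range (n+1)).card := by
    rw [Finset.card_range]
    exact lt_of_le_of_lt Polynomial.degree_le_natDegree (by exact_mod_cast Nat.lt_succ_of_le hp)
  have hD0 : 0 ≤ D := (norm_nonneg _).trans (hD 0 (Nat.zero_le _))
  have hM0 : 0 ≤ M := (norm_nonneg _).trans (hM 0 (Nat.zero_le _))
  rw [Lagrange.eq_interpolate hinj hdeg, Lagrange.interpolate_apply, Polynomial.eval_finsetSum]
  refine (norm_sum_le _ _).trans ?_
  have : ∀ i ∈ Finset.range (n+1), ‖Polynomial.eval x (Polynomial.C (p.eval (v i)) *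
      Lagrange.basis (Finset.range (n+1)) v i)‖ ≤ (D/δ)^n * M := by
    intro i hi
    have hi' : i ≤ n := by simpa [Nat.lt_succ_iff] using hi
    rw [Polynomial.eval_mul, Polynomial.eval_C, norm_mul, mul_comm]
    refine mul_le_mul ?_ (hM i hi') (norm_nonneg _) (by positivity)
    rw [Lagrange.basis, Polynomial.eval_prod, norm_prod]
    have hc : ((Finset.range (n+1)).erase i).card = n := by
      rw [Finset.card_erase_of_mem hi]; simp
    refine (Finset.prod_le_prod (g := fun _ => D/δ) (fun _ _ => norm_nonneg _) ?_).trans ?_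
    · intro j hj
      have hj' : j ≤ n := by
        have := Finset.mem_of_mem_erase hj
        simpa [Nat.lt_succ_iff] using this
      have hne : i ≠ j := fun h => by simp [h] at hj
      rw [Lagrange.basisDivisor]
      simp only [Polynomial.eval_mul, Polynomial.eval_C, Polynomial.eval_sub, Polynomial.eval_X, norm_mul, norm_inv]
      rw [mul_comm, ← div_eq_mul_inv]
      exact div_le_div₀ hD0 (hD j hj') hδ (hs i hi' j hj' hne)
    · rw [Finset.prod_const, hc]
  refine (Finset.sum_le_sum this).trans ?_
  simp
  apply le_of_eq; ring

theorem polyz (P : MvPolynomial (Fin 2) ℂ) (n : ℕ) (hP : P.totalDegree ≤ n) (w : ℂ) :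
   ∃ p : Polynomial ℂ, p.natDegree ≤ n ∧ ∀ z, p.eval z = MvPolynomial.eval ![z, w] P := by
  refine ⟨MvPolynomial.aeval ![Polynomial.X, Polynomial.C w] P, ?_, ?_⟩
  · have := MvPolynomial.aeval_natDegree_le (n := 1) P hP ![Polynomial.X, Polynomial.C w] (by
      intro i; fin_cases i <;> simp)
    simpa using this
  · intro z
    clear hP
    induction P using MvPolynomial.induction_on' with
    | monomial u a => simp [MvPolynomial.aeval_monomial, MvPolynomial.eval_monomial, Finsupp.prod_fintype]
    | add p q _ _ => simp_all
theorem polyw (P : MvPolynomial (Fin 2) ℂ) (n : ℕ) (hP : P.totalDegree ≤ n) (w : ℂ) :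
   ∃ p : Polynomial ℂ, p.natDegree ≤ n ∧ ∀ z, p.eval z = MvPolynomial.eval ![w, z] P := by
  refine ⟨MvPolynomial.aeval ![Polynomial.C w, Polynomial.X] P, ?_, ?_⟩
  · have := MvPolynomial.aeval_natDegree_le (n := 1) P hP ![Polynomial.C w, Polynomial.X] (by
      intro i; fin_cases i <;> simp)
    simpa using this
  · intro z
    clear hP
    induction P using MvPolynomial.induction_on' with
    | monomial u a => simp [MvPolynomial.aeval_monomial, MvPolynomial.eval_monomial, Finsupp.prod_fintype]
    | add p q _ _ => simp_all

theorem sum_split {a : ℕ → ℂ} {s : ℂ} (ha : HasSum a s) (N : ℕ) (A h : ℝ)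
    (h1 : ∀ m < N, ‖a m‖ ≤ A) (h2 : ∀ m, ‖a (m + N)‖ ≤ h * (1 / 2) ^ m) :
    ‖s‖ ≤ N * A + 2 * h := by
  have e := ha.summable.sum_add_tsum_nat_add N
  rw [ha.tsum_eq] at e
  rw [← e]
  refine (norm_add_le _ _).trans (add_le_add ?_ ?_)
  · refine (norm_sum_le _ _).trans ?_
    refine (Finset.sum_le_sum (fun i hi => h1 i (Finset.mem_range.1 hi))).trans ?_
    simp
  · have hg : HasSum (fun m : ℕ => h * (1 / 2 : ℝ) ^ m) (h * 2) :=
      hasSum_geometric_two.mul_left h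
    have := tsum_of_norm_bounded hg h2
    linarith

theorem growth_s5 (f : ℂ → ℂ) (hf : Differentiable ℂ f) (z₀ : ℂ) (R₁ R₂ R K : ℝ) (N : ℕ)
    (hR₁ : 0 < R₁) (hR₁₂ : R₁ ≤ R₂) (hR : 2 * R₂ ≤ R)
    (hN : 4 * K ≤ 2 ^ N)
    (h1 : ∀ z ∈ Metric.closedBall z₀ R₁, ‖f z‖ ≤ 1)
    (hK : ∀ M : ℝ, (∀ z ∈ Metric.closedBall z₀ R, ‖f z‖ ≤ M) →
      ∀ z ∈ Metric.closedBall z₀ (2 * R), ‖f z‖ ≤ K * M) :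
    ∀ z ∈ Metric.closedBall z₀ R₂, ‖f z‖ ≤ 5 * N * (R₂ / R₁) ^ N := by
  have hRpos : 0 < R := by linarith
  have hR₂ : 0 < R₂ := by linarith
  obtain ⟨zs, hzs, hmax⟩ := (isCompact_closedBall z₀ R).exists_isMaxOn
    ⟨z₀, Metric.mem_closedBall_self hRpos.le⟩ hf.continuous.norm.continuousOn
  set M := ‖f zs‖ with hM
  have hM0 : 0 ≤ M := norm_nonneg _
  have hMb : ∀ z ∈ Metric.closedBall z₀ R, ‖f z‖ ≤ M := fun z hz => hmax hz
  have hKb := hK M hMb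
  -- Cauchy estimates
  have cau : ∀ r B : ℝ, 0 < r → (∀ z ∈ Metric.closedBall z₀ r, ‖f z‖ ≤ B) → ∀ z ρ, ‖z - z₀‖ ≤ ρ → ∀ m : ℕ,
      ‖((m.factorial : ℂ))⁻¹ • (z - z₀) ^ m • iteratedDeriv m f z₀‖ ≤ B * (ρ / r) ^ m := by
    intro r B hr hB z ρ hz m
    have hc := Complex.norm_iteratedDeriv_le_of_forall_mem_sphere_norm_le (c := z₀) (C := B) m hr
      hf.diffContOnCl (fun z hz => hB z (Metric.sphere_subset_closedBall hz))
    have hB0 : 0 ≤ B := (norm_nonneg _).trans (hB z₀ (Metric.mem_closedBall_self hr.le))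
    have hρ : 0 ≤ ρ := (norm_nonneg _).trans hz
    rw [norm_smul, norm_smul, norm_inv, norm_pow, Complex.norm_natCast]
    have hfac : (0 : ℝ) < m.factorial := by exact_mod_cast m.factorial_pos
    calc _ ≤ (m.factorial : ℝ)⁻¹ * (ρ ^ m * (m.factorial * B / r ^ m)) := by gcongr
      _ = B * (ρ / r) ^ m := by rw [div_pow]; field_simp
  have ts := Complex.hasSum_taylorSeries_of_entire hf z₀
  have hq : 1 ≤ R / R₁ := by rw [one_le_div hR₁]; linarith
  have hq2 : 1 ≤ R₂ / R₁ := by rw [one_le_div hR₁]; linarith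
  have hpN : (0 : ℝ) < 2 ^ N := by positivity
  have hMle : M ≤ 2 * N * (R / R₁) ^ N := by
    have hz : ‖zs - z₀‖ ≤ R := by simpa [dist_eq_norm] using hzs
    have := sum_split (ts zs) N ((R / R₁) ^ N) (M / 4) (by
      intro m hm
      refine (cau R₁ 1 hR₁ h1 zs R hz m).trans ?_
      rw [one_mul]
      exact pow_le_pow_right₀ hq hm.le) (by
      intro m
      refine (cau (2 * R) (K * M) (by linarith) hKb zs R hz (m + N)).trans ?_
      have e : R / (2 * R) = 1 / 2 := by field_simp
      rw [e, pow_add]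
      have : K * (1 / 2) ^ N ≤ 1 / 4 := by
        rw [div_pow, one_pow, mul_one_div, div_le_iff₀ hpN]; linarith
      have h3 : 0 ≤ M * (1 / 2 : ℝ) ^ m := by positivity
      nlinarith)
    rw [← hM] at this
    linarith
  intro z hz
  have hz : ‖z - z₀‖ ≤ R₂ := by simpa [dist_eq_norm] using hz
  have := sum_split (ts z) N ((R₂ / R₁) ^ N) (2 * N * (R₂ / R₁) ^ N) (by
      intro m hm
      refine (cau R₁ 1 hR₁ h1 z R₂ hz m).trans ?_
      rw [one_mul]
      exact pow_le_pow_right₀ hq2 hm.le) (by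
      intro m
      refine (cau R M hRpos hMb z R₂ hz (m + N)).trans ?_
      rw [pow_add]
      have h4 : (R₂ / R) ^ m ≤ (1 / 2) ^ m := by
        gcongr ?_ ^ m
        rw [div_le_div_iff₀ hRpos two_pos]; linarith
      calc M * ((R₂ / R) ^ m * (R₂ / R) ^ N)
          ≤ (2 * N * (R / R₁) ^ N) * ((1 / 2) ^ m * (R₂ / R) ^ N) := by gcongr
        _ = 2 * N * ((R / R₁) * (R₂ / R)) ^ N * (1 / 2) ^ m := by rw [mul_pow]; ring
        _ = _ := by congr 3; field_simp)
  linarith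

theorem poly_upper (u : Polynomial ℂ) (d : ℕ) (hd : u.natDegree ≤ d) (r : ℝ) (hr : 1 ≤ r) (z : ℂ)
    (hz : ‖z‖ ≤ r) : ‖u.eval z‖ ≤ (∑ i ∈ Finset.range (u.natDegree + 1), ‖u.coeff i‖) * r ^ d := by
  rw [Polynomial.eval_eq_sum_range, Finset.sum_mul]
  refine (norm_sum_le _ _).trans (Finset.sum_le_sum ?_)
  intro i hi
  rw [norm_mul, norm_pow]
  have : i ≤ d := by have := Finset.mem_range.1 hi; omega
  gcongr
  exact (pow_le_pow_left₀ (norm_nonneg _) hz i).trans (pow_le_pow_right₀ hr this)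

theorem poly_bounds (u : Polynomial ℂ) (hu : u.natDegree ≠ 0) : ∃ S a : ℝ, 1 ≤ S ∧ 0 < a ∧
    (∀ r : ℝ, 1 ≤ r → ∀ z, ‖z‖ ≤ r → ‖u.eval z‖ ≤ S * r ^ u.natDegree) ∧
    (∀ r : ℝ, 1 ≤ r → ∀ x y, ‖x‖ ≤ r → ‖y‖ ≤ r →
      ‖u.eval x - u.eval y‖ ≤ S * r ^ u.natDegree * ‖x - y‖) ∧
    (∀ z, 1 ≤ ‖z‖ → 2 * S ≤ a * ‖z‖ → a / 2 * ‖z‖ ^ u.natDegree ≤ ‖u.eval z‖) := by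
  set S1 := ∑ i ∈ Finset.range (u.natDegree + 1), ‖u.coeff i‖ with hS1
  set S2 := ∑ i ∈ Finset.range (u.derivative.natDegree + 1), ‖u.derivative.coeff i‖ with hS2
  have h1 : 0 ≤ S1 := Finset.sum_nonneg (fun _ _ => norm_nonneg _)
  have h2 : 0 ≤ S2 := Finset.sum_nonneg (fun _ _ => norm_nonneg _)
  have ha : 0 < ‖u.leadingCoeff‖ := by
    rw [norm_pos_iff, Ne, Polynomial.leadingCoeff_eq_zero]
    rintro rfl; simp at hu
  refine ⟨1 + S1 + S2, ‖u.leadingCoeff‖, by linarith, ha, ?_, ?_, ?_⟩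
  · intro r hr z hz
    refine (poly_upper u _ le_rfl r hr z hz).trans ?_
    gcongr
    linarith
  · intro r hr x y hx hy
    refine Convex.norm_image_sub_le_of_norm_deriv_le (s := Metric.closedBall (0:ℂ) r)
      (f := fun z => u.eval z) (fun z _ => u.differentiableAt) ?_ (convex_closedBall _ _)
      (by simpa using hy) (by simpa using hx)
    intro z hz
    rw [Polynomial.deriv]
    refine (poly_upper u.derivative u.natDegree
      ((Polynomial.natDegree_derivative_le u).trans (Nat.sub_le _ _)) r hr z (by simpa using hz)).trans ?_
    gcongr
    linarith
  · intro z hz h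
    obtain ⟨k, hk⟩ := Nat.exists_eq_succ_of_ne_zero hu
    have e : u.eval z = (∑ i ∈ Finset.range u.natDegree, u.coeff i * z ^ i) +
        u.leadingCoeff * z ^ u.natDegree := by
      rw [Polynomial.eval_eq_sum_range, Finset.sum_range_succ]; rfl
    have hlow : ‖∑ i ∈ Finset.range u.natDegree, u.coeff i * z ^ i‖ ≤ S1 * ‖z‖ ^ k := by
      refine (norm_sum_le _ _).trans ?_
      have : ∑ i ∈ Finset.range u.natDegree, ‖u.coeff i‖ ≤ S1 := by
        rw [hS1, Finset.sum_range_succ]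
        linarith [norm_nonneg (u.coeff u.natDegree)]
      refine le_trans ?_ (mul_le_mul_of_nonneg_right this (by positivity))
      rw [Finset.sum_mul]
      refine Finset.sum_le_sum ?_
      intro i hi
      have hi := Finset.mem_range.1 hi
      rw [norm_mul, norm_pow]
      gcongr
      omega
    have h3 := norm_sub_le (u.eval z) (∑ i ∈ Finset.range u.natDegree, u.coeff i * z ^ i)
    rw [e, add_sub_cancel_left, ← e, norm_mul, norm_pow] at h3
    have h4 : 0 ≤ ‖z‖ ^ k := by positivity
    have h5 : ‖z‖ ^ u.natDegree = ‖z‖ ^ k * ‖z‖ := by rw [hk, pow_succ]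
    rw [h5] at h3 ⊢
    have h6 : ‖z‖ ^ k * (2 * S1) ≤ ‖z‖ ^ k * (‖u.leadingCoeff‖ * ‖z‖) := by
      exact mul_le_mul_of_nonneg_left (by linarith) h4
    linarith

set_option maxHeartbeats 2000000 in
theorem doubling (t : Polynomial ℂ) (z₀ : ℂ) (ht : t.natDegree ≠ 0) (R₂ : ℝ) :
    ∃ Q : ℕ, ∀ n : ℕ, 1 ≤ n → ∃ R : ℝ, 2 * R₂ ≤ R ∧
      ∀ P : MvPolynomial (Fin 2) ℂ, P.totalDegree ≤ n → ∀ M : ℝ,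
        (∀ z ∈ Metric.closedBall z₀ R,
          ‖MvPolynomial.eval ![z, Complex.exp (t.eval z)] P‖ ≤ M) →
        ∀ z ∈ Metric.closedBall z₀ (2 * R),
          ‖MvPolynomial.eval ![z, Complex.exp (t.eval z)] P‖ ≤ Real.exp (Q * n ^ 2) * M := by
  set u := Polynomial.taylor z₀ t with hu
  have hut : ∀ z, t.eval z = u.eval (z - z₀) := by
    intro z; rw [hu, Polynomial.taylor_eval]; simp
  have hud : u.natDegree ≠ 0 := by rw [hu, Polynomial.natDegree_taylor]; exact ht
  obtain ⟨S, a, hS, ha, hup, hlip, hlow⟩ := poly_bounds u hud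
  set d := u.natDegree with hd
  -- threshold radius
  obtain ⟨R0, hR0⟩ : ∃ R0 : ℝ, R0 = max (max 1 (2 * S / a)) (2 * R₂) := ⟨_, rfl⟩
  have hR01 : 1 ≤ R0 := by rw [hR0]; exact (le_max_left _ _).trans (le_max_left _ _)
  have hR0a : 2 * S / a ≤ R0 := by rw [hR0]; exact (le_max_right _ _).trans (le_max_left _ _)
  have hR02 : 2 * R₂ ≤ R0 := by rw [hR0]; exact le_max_right _ _
  obtain ⟨B, hB⟩ : ∃ B : ℝ, B = max (R0 ^ d) (17 / a) := ⟨_, rfl⟩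
  have hB0 : R0 ^ d ≤ B := by rw [hB]; exact le_max_left _ _
  have hBa : 17 / a ≤ B := by rw [hB]; exact le_max_right _ _
  have hB1 : 1 ≤ B := (one_le_pow₀ hR01).trans hB0
  obtain ⟨Q, hQ⟩ := exists_nat_ge (3 * S * B ^ 2 + S * 2 ^ d * B + 6)
  refine ⟨Q, ?_⟩
  intro n hn
  have hn1 : (1 : ℝ) ≤ n := by exact_mod_cast hn
  have hBn : B ≤ B * n := by nlinarith
  obtain ⟨R, hRnn, hRd⟩ : ∃ R : ℝ, 0 ≤ R ∧ R ^ d = B * n :=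
    ⟨(B * n) ^ ((d : ℝ)⁻¹), by positivity, Real.rpow_inv_natCast_pow (by positivity) hud⟩
  have hRR0 : R0 ≤ R := by
    refine le_of_pow_le_pow_left₀ hud hRnn ?_
    rw [hRd]; linarith
  have hR1 : 1 ≤ R := hR01.trans hRR0
  have hRle : R ≤ B * n := by rw [← hRd]; exact le_self_pow₀ hR1 hud
  refine ⟨R, hR02.trans hRR0, ?_⟩
  intro P hP M hM z hz
  have hz' : ‖z - z₀‖ ≤ 2 * R := by simpa [dist_eq_norm] using hz
  have hM0 : 0 ≤ M := (norm_nonneg _).trans (hM z₀ (Metric.mem_closedBall_self hRnn))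
  -- roots
  have hroot : ∀ c : ℂ, ‖c‖ ≤ 8 * n → ∃ x, ‖x - z₀‖ ≤ R ∧ t.eval x = c := by
    intro c hc
    obtain ⟨x, hx⟩ := IsAlgClosed.exists_root (u - Polynomial.C c) (by
      intro h
      have := Polynomial.natDegree_eq_of_degree_eq_some h
      rw [Polynomial.natDegree_sub_C] at this
      exact hud this)
    have hx : u.eval x = c := by simpa [sub_eq_zero] using hx
    refine ⟨x + z₀, ?_, by rw [hut]; simpa using hx⟩
    rw [add_sub_cancel_right]
    by_contra hlt
    push Not at hlt
    have h1 : 1 ≤ ‖x‖ := by linarith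
    have h2 : 2 * S ≤ a * ‖x‖ := by
      have := (div_le_iff₀ ha).1 (hR0a.trans (hRR0.trans hlt.le)); linarith
    have h3 := hlow x h1 h2
    rw [hx] at h3
    have h4 : R ^ d ≤ ‖x‖ ^ d := pow_le_pow_left₀ hRnn hlt.le d
    rw [hRd] at h4
    have h5 : 17 ≤ B * a := (div_le_iff₀ ha).1 hBa
    have h6 : a / 2 * (B * n) ≤ 8 * n := (mul_le_mul_of_nonneg_left h4 (by positivity)).trans (h3.trans hc)
    nlinarith
  -- first interpolation
  have key1 : ∀ j ≤ n, ‖MvPolynomial.eval ![z, ((j : ℂ) + 1)] P‖ ≤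
      (n + 1) * (3 * S * B ^ 2 * n ^ 2) ^ n * M := by
    intro j hj
    have hj' : (j : ℝ) ≤ n := by exact_mod_cast hj
    have hc : ∀ l : ℕ, ∃ x, l ≤ n → ‖x - z₀‖ ≤ R ∧
        t.eval x = (Real.log (j + 1) : ℂ) + l * (2 * Real.pi * Complex.I) := by
      intro l
      by_cases hl : l ≤ n
      · obtain ⟨x, hx⟩ := hroot ((Real.log (j + 1) : ℂ) + l * (2 * Real.pi * Complex.I)) (by
          have hl' : (l : ℝ) ≤ n := by exact_mod_cast hl
          refine (norm_add_le _ _).trans ?_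
          have e1 : ‖((Real.log (j + 1) : ℝ) : ℂ)‖ ≤ n := by
            rw [Complex.norm_real, Real.norm_of_nonneg (Real.log_nonneg (by linarith [Nat.cast_nonneg (α := ℝ) j]))]
            have := Real.log_le_sub_one_of_pos (x := (j : ℝ) + 1) (by positivity)
            linarith
          have e2 : ‖(l : ℂ) * (2 * Real.pi * Complex.I)‖ ≤ 7 * n := by
            simp only [norm_mul, Complex.norm_natCast, Complex.norm_I, Complex.norm_real, Complex.norm_ofNat,
              Real.norm_of_nonneg Real.pi_pos.le]
            have := Real.pi_lt_d2
            have := Real.pi_pos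
            nlinarith
          linarith)
        exact ⟨x, fun _ => hx⟩
      · exact ⟨0, fun h => absurd h hl⟩
    choose v hv using hc
    obtain ⟨p, hp, hpe⟩ := polyz P n hP ((j : ℂ) + 1)
    have := lagr p hp v z (3 * R) (1 / (S * (B * n))) M (by positivity) (by
        intro i hi
        have : z - v i = (z - z₀) - (v i - z₀) := by ring
        rw [this]
        refine (norm_sub_le _ _).trans ?_
        linarith [(hv i hi).1]) (by
        intro i hi k hk hik
        have h1 := hlip R hR1 (v i - z₀) (v k - z₀) (hv i hi).1 (hv k hk).1
        rw [← hut, ← hut, (hv i hi).2, (hv k hk).2, hRd, sub_sub_sub_cancel_right,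
          add_sub_add_left_eq_sub, ← sub_mul] at h1
        have h2 : 1 ≤ ‖((i : ℂ) - k) * (2 * Real.pi * Complex.I)‖ := by
          have e3 : (1 : ℝ) ≤ ‖((i : ℂ) - k)‖ := by
            have : ((i : ℂ) - k) = (((i : ℤ) - k : ℤ) : ℂ) := by push_cast; rfl
            rw [this, Complex.norm_intCast]
            have h0 : ((i : ℤ) - k) ≠ 0 := by omega
            exact_mod_cast Int.one_le_abs h0
          simp only [norm_mul, Complex.norm_I, Complex.norm_real, Complex.norm_ofNat,
              Real.norm_of_nonneg Real.pi_pos.le]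
          have := Real.pi_gt_three
          nlinarith
        rw [div_le_iff₀ (by positivity)]
        linarith) (by
        intro i hi
        rw [hpe]
        have h1 := hM (v i) (by simpa [dist_eq_norm] using (hv i hi).1)
        have h2 : Complex.exp (t.eval (v i)) = (j : ℂ) + 1 := by
          rw [(hv i hi).2, Complex.exp_add, Complex.exp_nat_mul_two_pi_mul_I, mul_one,
            ← Complex.ofReal_exp, Real.exp_log (by positivity)]
          push_cast; rfl
        rwa [h2] at h1)
    rw [hpe] at this
    refine this.trans ?_
    gcongr
    rw [div_div_eq_mul_div, div_one]
    have : R * (S * (B * n)) ≤ (B * n) * (S * (B * n)) := by gcongr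
    nlinarith
  -- second interpolation
  set w := Complex.exp (t.eval z) with hw
  have hwn : ‖w‖ ≤ Real.exp (S * 2 ^ d * B * n) := by
    rw [hw, Complex.norm_exp]
    apply Real.exp_le_exp.2
    refine (Complex.re_le_norm _).trans ?_
    rw [hut]
    refine (hup (2 * R) (by linarith) _ hz').trans ?_
    rw [mul_pow, hRd]
    apply le_of_eq; ring
  obtain ⟨p, hp, hpe⟩ := polyw P n hP z
  have fin := lagr p hp (fun j => (j : ℂ) + 1) w (Real.exp (S * 2 ^ d * B * n) + (n + 1)) 1
    ((n + 1) * (3 * S * B ^ 2 * n ^ 2) ^ n * M) one_pos (by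
      intro i hi
      have hi' : (i : ℝ) ≤ n := by exact_mod_cast hi
      refine (norm_sub_le _ _).trans (add_le_add hwn ?_)
      refine (norm_add_le _ _).trans ?_
      simpa using hi') (by
      intro i hi k hk hik
      have : ((i : ℂ) + 1) - (k + 1) = (((i : ℤ) - k : ℤ) : ℂ) := by push_cast; ring
      simp only [this]
      rw [Complex.norm_intCast]
      have h0 : ((i : ℤ) - k) ≠ 0 := by omega
      exact_mod_cast Int.one_le_abs h0) (by
      intro i hi
      rw [hpe]
      exact key1 i hi)
  rw [hpe] at fin
  refine fin.trans ?_
  rw [div_one]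
  have g1 : (n : ℝ) + 1 ≤ Real.exp n := Real.add_one_le_exp _
  have g0 : (n : ℝ) ≤ Real.exp n := by linarith
  obtain ⟨c, hc⟩ : ∃ c, c = 3 * S * B ^ 2 := ⟨_, rfl⟩
  obtain ⟨A, hA⟩ : ∃ A, A = S * 2 ^ d * B := ⟨_, rfl⟩
  rw [← hc, ← hA] at hQ ⊢
  have hc0 : 0 ≤ c := by rw [hc]; positivity
  have hA0 : 0 ≤ A := by rw [hA]; positivity
  have g2 : c * n ^ 2 ≤ Real.exp ((c + 2) * n) := by
    have : c ≤ Real.exp (c * n) := by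
      have := Real.add_one_le_exp (c * n)
      nlinarith
    calc c * n ^ 2 ≤ Real.exp (c * n) * Real.exp n ^ 2 := by gcongr
      _ = _ := by rw [← Real.exp_nat_mul, ← Real.exp_add]; congr 1; push_cast; ring
  have g3 : Real.exp (A * n) + (n + 1) ≤ Real.exp ((A + 2) * n) := by
    have e1 : Real.exp (A * n) ≤ Real.exp ((A + 1) * n) := Real.exp_le_exp.2 (by nlinarith)
    have e2 : Real.exp n ≤ Real.exp ((A + 1) * n) := Real.exp_le_exp.2 (by nlinarith)
    have e3 : Real.exp ((A + 2) * n) = Real.exp ((A + 1) * n) * Real.exp n := by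
      rw [← Real.exp_add]; congr 1; ring
    rw [e3]
    have : 0 < Real.exp ((A + 1) * n) := Real.exp_pos _
    nlinarith
  calc (n + 1) * (Real.exp (A * n) + (n + 1)) ^ n * ((n + 1) * (c * n ^ 2) ^ n * M)
      ≤ Real.exp n * (Real.exp ((A + 2) * n)) ^ n *
        (Real.exp n * (Real.exp ((c + 2) * n)) ^ n * M) := by gcongr
    _ = Real.exp (n + n * ((A + 2) * n) + (n + n * ((c + 2) * n))) * M := by
        rw [Real.exp_add, Real.exp_add, Real.exp_add, Real.exp_nat_mul, Real.exp_nat_mul]; ring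
    _ ≤ _ := by
        gcongr
        have : (n : ℝ) ≤ n ^ 2 := by nlinarith
        have : (c + A + 6) * (n : ℝ) ^ 2 ≤ Q * n ^ 2 := by gcongr
        nlinarith

/-- Boundedness of the generalized Siciak extremal function for the
family `V_n = {P(z, e^{t(z)}) : deg P ≤ n}` with exponent function `φ(n) = n²`, on
complex disks: if `P(z, e^{t(z)})` is bounded by `1` on the disk of radius `R₁` about
`z₀`, then it is bounded by `C^{n²}` on the concentric disk of radius `R₂ ≥ R₁`, where
`C = C(t, z₀, R₁, R₂) ≥ 1`. -/
theorem siciak_extremal_bounded_disk_general (t : Polynomial ℂ) (z₀ : ℂ)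
    (R₁ R₂ : ℝ) (hR₁ : 0 < R₁) (hR₁₂ : R₁ ≤ R₂) :
    ∃ C : ℝ, 1 ≤ C ∧
      ∀ n : ℕ, 1 ≤ n → ∀ P : MvPolynomial (Fin 2) ℂ, P.totalDegree ≤ n →
        (∀ z ∈ Metric.closedBall z₀ R₁,
          ‖MvPolynomial.eval ![z, Complex.exp (t.eval z)] P‖ ≤ 1) →
        ∀ z ∈ Metric.closedBall z₀ R₂,
          ‖MvPolynomial.eval ![z, Complex.exp (t.eval z)] P‖ ≤ C ^ (n ^ 2) := by
  by_cases ht : t.natDegree = 0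
  · obtain ⟨b, rfl⟩ : ∃ b, t = Polynomial.C b := ⟨_, Polynomial.eq_C_of_natDegree_eq_zero ht⟩
    have hR₂ : 0 < R₂ := by linarith
    have hx : 0 < 2 * R₂ / R₁ := by positivity
    obtain ⟨x, hxe⟩ : ∃ x, x = 2 * R₂ / R₁ := ⟨_, rfl⟩
    rw [← hxe] at hx
    refine ⟨Real.exp (x + 2), Real.one_le_exp (by linarith), ?_⟩
    intro n hn P hP h1 z hz
    have hn1 : (1 : ℝ) ≤ n := by exact_mod_cast hn
    simp only [Polynomial.eval_C] at h1 ⊢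
    have hz' : ‖z - z₀‖ ≤ R₂ := by simpa [dist_eq_norm] using hz
    obtain ⟨p, hp, hpe⟩ := polyz P n hP (Complex.exp b)
    have hv : ∀ i ≤ n, ‖((i * (R₁ / n) : ℝ) : ℂ)‖ ≤ R₁ := by
      intro i hi
      have hi' : (i : ℝ) ≤ n := by exact_mod_cast hi
      rw [Complex.norm_real, Real.norm_of_nonneg (by positivity)]
      calc (i : ℝ) * (R₁ / n) ≤ n * (R₁ / n) := by gcongr
        _ = R₁ := by field_simp
    have fin := lagr p hp (fun i => z₀ + ((i * (R₁ / n) : ℝ) : ℂ)) z (2 * R₂) (R₁ / n) 1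
      (by positivity) (by
        intro i hi
        simp only [← sub_sub]
        refine (norm_sub_le _ _).trans ?_
        linarith [hv i hi]) (by
        intro i hi k hk hik
        have : (z₀ + ((i * (R₁ / n) : ℝ) : ℂ)) - (z₀ + ((k * (R₁ / n) : ℝ) : ℂ)) =
            (((i : ℤ) - k : ℤ) : ℂ) * ((R₁ / n : ℝ) : ℂ) := by push_cast; ring
        simp only [this]
        have hpos : 0 < R₁ / n := by positivity
        rw [norm_mul, Complex.norm_intCast, Complex.norm_real, Real.norm_of_nonneg hpos.le]
        have h0 : ((i : ℤ) - k) ≠ 0 := by omega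
        have h2 : (1 : ℝ) ≤ |(((i : ℤ) - k : ℤ) : ℝ)| := by exact_mod_cast Int.one_le_abs h0
        nlinarith) (by
        intro i hi
        rw [hpe]
        refine h1 _ ?_
        rw [Metric.mem_closedBall, dist_eq_norm, add_sub_cancel_left]
        exact hv i hi)
    rw [hpe] at fin
    refine fin.trans ?_
    have g1 : (n : ℝ) + 1 ≤ Real.exp n := Real.add_one_le_exp _
    have g0 : (n : ℝ) ≤ Real.exp n := by linarith
    have g2 : 2 * R₂ / (R₁ / n) ≤ Real.exp ((x + 1) * n) := by
      have e : 2 * R₂ / (R₁ / n) = x * n := by rw [hxe]; field_simp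
      have : x ≤ Real.exp (x * n) := by
        have := Real.add_one_le_exp (x * n)
        nlinarith
      rw [e, add_mul, one_mul, Real.exp_add]
      gcongr
    calc (n + 1) * (2 * R₂ / (R₁ / n)) ^ n * 1
        ≤ Real.exp n * (Real.exp ((x + 1) * n)) ^ n * 1 := by gcongr
      _ = Real.exp (n + n * ((x + 1) * n)) := by
          rw [Real.exp_add, Real.exp_nat_mul _ n, mul_one]
      _ ≤ Real.exp (((n ^ 2 : ℕ) : ℝ) * (x + 2)) := by
          apply Real.exp_le_exp.2
          push_cast
          nlinarith
      _ = _ := by rw [Real.exp_nat_mul]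
  · obtain ⟨Q, hQ⟩ := doubling t z₀ ht R₂
    have hq2 : 1 ≤ R₂ / R₁ := by rw [one_le_div hR₁]; linarith
    refine ⟨(10 * (R₂ / R₁)) ^ (2 * Q + 2), one_le_pow₀ (by linarith), ?_⟩
    intro n hn P hP h1 z hz
    obtain ⟨R, hR, hD⟩ := hQ n hn
    obtain ⟨N, hN⟩ : ∃ N, N = (2 * Q + 2) * n ^ 2 := ⟨_, rfl⟩
    have hdiff : Differentiable ℂ
        (fun z => MvPolynomial.eval ![z, Complex.exp (t.eval z)] P) := by
      simp only [MvPolynomial.eval_eq', Fin.prod_univ_two, Matrix.cons_val_zero,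
        Matrix.cons_val_one]
      have := t.differentiable
      fun_prop
    have hn2 : 1 ≤ n ^ 2 := Nat.one_le_pow _ _ hn
    have hN1 : 1 ≤ N := by rw [hN]; nlinarith
    have fin := growth_s5 _ hdiff z₀ R₁ R₂ R (Real.exp (Q * n ^ 2)) N hR₁ hR₁₂ hR (by
      have e : Real.exp (Q * n ^ 2) ≤ 2 ^ (2 * (Q * n ^ 2)) := by
        have : (Q : ℝ) * n ^ 2 = ((Q * n ^ 2 : ℕ) : ℝ) * 1 := by push_cast; ring
        rw [this, Real.exp_nat_mul, pow_mul (2 : ℝ) 2]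
        refine pow_le_pow_left₀ (Real.exp_pos _).le ?_ _
        have := Real.exp_one_lt_d9
        linarith
      calc 4 * Real.exp (Q * n ^ 2) ≤ 2 ^ 2 * 2 ^ (2 * (Q * n ^ 2)) := by linarith
        _ = 2 ^ (2 + 2 * (Q * n ^ 2)) := by rw [pow_add]
        _ ≤ 2 ^ N := by
          refine pow_le_pow_right₀ (by norm_num) ?_
          rw [hN]; nlinarith) h1 (hD P hP) z hz
    refine fin.trans ?_
    rw [← pow_mul, ← hN, mul_pow]
    gcongr
    have h5 : (5 : ℝ) ≤ 5 ^ N := le_self_pow₀ (by norm_num) (by omega)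
    have h6 : (N : ℝ) ≤ 2 ^ N := by exact_mod_cast Nat.lt_two_pow_self.le
    have h7 : (10 : ℝ) ^ N = 5 ^ N * 2 ^ N := by rw [← mul_pow]; norm_num
    rw [h7]
    gcongr
end

section
/- There is an absolute constant A ≤ 4 with the following property: for all integers m ≥ 1 and n ≥ 0, all polynomials b₀,…,b_m ∈ ℂ[w] of degree at most n, not all identically zero, and every R > 0, the exponential polynomial F(w) = Σ_{k=0}^m b_k(w) e^{kw} has at most A·( (m+1)(n+1) + mR ) zeros (counted without multiplicity) in the closed disk {w ∈ ℂ : |w| ≤ R}. In particular, for b_k of degree at most n and m = nd this gives the bound A(d n² + d n R), up to the absolute constant, on the number of zeros in |w| ≤ R. -/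
namespace TZ

open Polynomial

/-- The exponential polynomial with coefficients `b` and frequencies `ω`. -/
noncomputable def E (m : ℕ) (ω : ℕ → ℂ) (b : ℕ → Polynomial ℂ) (z : ℂ) : ℂ :=
  ∑ k ∈ Finset.range (m + 1), (b k).eval z * Complex.exp (ω k * z)

/-- The effect of `D - ω i` on coefficients. -/
noncomputable def step (ω : ℕ → ℂ) (i : ℕ) (b : ℕ → Polynomial ℂ) : ℕ → Polynomial ℂ :=
  fun k => derivative (b k) + C (ω k - ω i) * b k

/-- Iterated effect. -/
noncomputable def T (ω : ℕ → ℂ) : List ℕ → (ℕ → Polynomial ℂ) → (ℕ → Polynomial ℂ)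
  | [], b => b
  | i :: l, b => T ω l (step ω i b)

lemma hasDerivAt_E (m : ℕ) (ω : ℕ → ℂ) (i : ℕ) (b : ℕ → Polynomial ℂ) (z : ℂ) :
    HasDerivAt (E m ω b) (E m ω (step ω i b) z + ω i * E m ω b z) z := by
  have h : HasDerivAt (E m ω b) (∑ k ∈ Finset.range (m + 1),
      ((derivative (b k)).eval z * Complex.exp (ω k * z) +
        (b k).eval z * (Complex.exp (ω k * z) * (ω k * 1)))) z := by
    unfold E
    refine HasDerivAt.fun_sum fun k _ => ?_
    exact ((b k).hasDerivAt z).mul (((hasDerivAt_id z).const_mul (ω k)).cexp)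
  convert h using 1
  unfold E step
  rw [Finset.mul_sum, ← Finset.sum_add_distrib]
  refine Finset.sum_congr rfl fun k _ => ?_
  simp only [eval_add, eval_mul, eval_C]
  ring

lemma differentiable_E (m : ℕ) (ω : ℕ → ℂ) (b : ℕ → Polynomial ℂ) :
    Differentiable ℂ (E m ω b) := fun z => (hasDerivAt_E m ω 0 b z).differentiableAt

lemma E_step (m : ℕ) (ω : ℕ → ℂ) (i : ℕ) (b : ℕ → Polynomial ℂ) :
    E m ω (step ω i b) = fun z => deriv (E m ω b) z - ω i * E m ω b z := by
  ext z
  rw [(hasDerivAt_E m ω i b z).deriv]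
  ring

lemma iter_E_step (m : ℕ) (ω : ℕ → ℂ) (i : ℕ) (b : ℕ → Polynomial ℂ) (q : ℕ) (z : ℂ) :
    iteratedDeriv q (E m ω (step ω i b)) z =
      iteratedDeriv (q + 1) (E m ω b) z - ω i * iteratedDeriv q (E m ω b) z := by
  have h1 : ContDiff ℂ q (E m ω b) := (differentiable_E m ω b).contDiff
  have h2 : ContDiff ℂ q (deriv (E m ω b)) := (differentiable_E m ω b).deriv.contDiff
  rw [E_step, iteratedDeriv_fun_sub h2.contDiffAt (contDiff_const.mul h1).contDiffAt,
    iteratedDeriv_succ', iteratedDeriv_const_mul_field]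

lemma degree_step (ω : ℕ → ℂ) (i : ℕ) (l : List ℕ) (b : ℕ → Polynomial ℂ) (k : ℕ)
    (h : (b k).degree < ((i :: l).count k : ℕ)) :
    (step ω i b k).degree < (l.count k : ℕ) := by
  unfold step
  by_cases hk : i = k
  · subst hk
    simp only [sub_self, map_zero, zero_mul, add_zero]
    rw [List.count_cons_self] at h
    by_cases h0 : b i = 0
    · rw [h0]; simp
    · have h1 := degree_derivative_lt h0
      by_cases hd : derivative (b i) = 0
      · rw [hd]; simp
      · rw [degree_eq_natDegree h0] at h h1
        rw [degree_eq_natDegree hd] at h1 ⊢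
        have a1 : (derivative (b i)).natDegree < (b i).natDegree := by exact_mod_cast h1
        have a2 : (b i).natDegree < List.count i l + 1 := by exact_mod_cast h
        have : (derivative (b i)).natDegree < List.count i l := by omega
        exact_mod_cast this
  · rw [List.count_cons_of_ne hk] at h
    refine lt_of_le_of_lt (degree_add_le _ _) (max_lt ?_ ?_)
    · exact lt_of_le_of_lt degree_derivative_le h
    · refine lt_of_le_of_lt ?_ h
      refine (degree_mul_le _ _).trans ?_
      calc _ ≤ 0 + (b k).degree := by gcongr; exact degree_C_le
        _ = _ := zero_add _

lemma growth (m : ℕ) (ω : ℕ → ℂ) (Δ : ℝ) (z : ℂ) (l : List ℕ) :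
    ∀ (b : ℕ → Polynomial ℂ), (∀ i ∈ l, ‖ω i‖ ≤ Δ) →
    (∀ k ∈ Finset.range (m + 1), (b k).degree < (l.count k : ℕ)) →
    ∀ c : ℕ → ℝ, (∀ j < l.length, ‖E m ω (T ω (l.take j) b) 0‖ ≤ c j) →
    ∀ t ∈ Set.Icc (0 : ℝ) 1, ‖E m ω b (t * z)‖ ≤ Real.exp (Δ * (t * ‖z‖)) *
      ∑ j ∈ Finset.range l.length, (t * ‖z‖) ^ j / j.factorial * c j := by
  induction l with
  | nil =>
    intro b _ hb c _ t _
    have : E m ω b (t * z) = 0 := by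
      unfold E
      refine Finset.sum_eq_zero fun k hk => ?_
      have := hb k hk
      have h0 : b k = 0 := by
        rw [← degree_eq_bot]
        simpa [Nat.WithBot.lt_zero_iff] using this
      rw [h0]; simp
    rw [this]; simp
  | cons i l ih =>
    intro b hω hb c hc t ht
    have key := ih (step ω i b) (fun j hj => hω j (List.mem_cons_of_mem _ hj))
      (fun k hk => degree_step ω i l b k (hb k hk)) (fun j => c (j + 1))
      (fun j hj => by
        have := hc (j + 1) (by simpa using hj)
        simpa [T] using this)
    have hωi : ‖ω i‖ ≤ Δ := hω i (by simp)
    have hc0 : ‖E m ω b 0‖ ≤ c 0 := by simpa [T] using hc 0 (by simp)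
    have hexp : ∀ s : ℝ, 0 ≤ s → ‖Complex.exp (ω i * (s * z))‖ ≤ Real.exp (Δ * (s * ‖z‖)) := by
      intro s hs
      refine (Complex.norm_exp_le_exp_norm _).trans (Real.exp_le_exp.2 ?_)
      rw [norm_mul, norm_mul, Complex.norm_real, Real.norm_of_nonneg hs]
      gcongr
    let f : ℝ → ℂ := fun s => Complex.exp (ω i * ((t - s : ℝ) * z)) * E m ω b (s * z)
    let f' : ℝ → ℂ := fun s => Complex.exp (ω i * ((t - s : ℝ) * z)) *
      (z * E m ω (step ω i b) (s * z))
    have hf : ∀ s : ℝ, HasDerivAt f (f' s) s := by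
      intro s
      have e1 : HasDerivAt (fun s : ℂ => Complex.exp (ω i * ((t - s) * z)))
          (Complex.exp (ω i * ((t - s) * z)) * (ω i * ((-1) * z))) (s : ℂ) := by
        refine HasDerivAt.cexp (HasDerivAt.const_mul _ (HasDerivAt.mul_const ?_ _))
        simpa using (hasDerivAt_id (s : ℂ)).const_sub (t : ℂ)
      have e2 : HasDerivAt (fun s : ℂ => E m ω b (s * z))
          ((E m ω (step ω i b) (s * z) + ω i * E m ω b (s * z)) * (1 * z)) (s : ℂ) :=
        HasDerivAt.comp (h := fun s : ℂ => s * z) (s : ℂ) (hasDerivAt_E m ω i b (s * z))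
          ((hasDerivAt_id (s : ℂ)).mul_const z)
      have e3 := (e1.mul e2).comp_ofReal
      have e4 := by
        refine e3.congr_of_eventuallyEq (f₁ := f) (Filter.Eventually.of_forall fun x => ?_)
        simp [f]
      refine e4.congr_deriv ?_
      simp only [f']
      push_cast
      ring
    let B : ℝ → ℝ := fun s => Real.exp (Δ * (t * ‖z‖)) * (c 0 +
      ∑ j ∈ Finset.range l.length, (s * ‖z‖) ^ (j + 1) / (j + 1).factorial * c (j + 1))
    let B' : ℝ → ℝ := fun s => Real.exp (Δ * (t * ‖z‖)) * (‖z‖ *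
      ∑ j ∈ Finset.range l.length, (s * ‖z‖) ^ j / j.factorial * c (j + 1))
    have hB : ∀ s, HasDerivAt B (B' s) s := by
      intro s
      refine HasDerivAt.const_mul _ ?_
      rw [Finset.mul_sum]
      refine HasDerivAt.const_add _ (HasDerivAt.fun_sum fun j _ => ?_)
      have := ((((hasDerivAt_id s).mul_const ‖z‖).pow (j + 1)).div_const
        ((j + 1).factorial : ℝ)).mul_const (c (j + 1))
      refine this.congr_deriv ?_
      rw [Nat.factorial_succ]
      have : (j.factorial : ℝ) ≠ 0 := by positivity
      push_cast
      simp only [id]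
      field_simp
    have main := image_norm_le_of_norm_deriv_right_le_deriv_boundary (f := f) (a := 0) (b := t)
      (f' := f') (fun s _ => (hf s).continuousAt.continuousWithinAt)
      (fun s _ => (hf s).hasDerivWithinAt) (B := B) (B' := B') ?_ hB ?_
      (Set.right_mem_Icc.2 ht.1)
    · simp only [f, B] at main
      rw [List.length_cons, Finset.sum_range_succ']
      simpa [add_comm] using main
    · simp only [f, B, norm_mul]
      have := hexp t ht.1
      simp only [sub_zero, Complex.ofReal_zero, zero_mul]
      have h2 : ∑ j ∈ Finset.range l.length,
        (0 : ℝ) ^ (j + 1) / (j + 1).factorial * c (j + 1) = 0 := by simp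
      rw [h2, add_zero]
      gcongr
    · intro s hs
      simp only [f', B', norm_mul]
      have k1 := hexp (t - s) (by linarith [hs.2])
      have k2 := key s ⟨hs.1, by linarith [hs.2, ht.2]⟩
      calc _ ≤ Real.exp (Δ * ((t - s) * ‖z‖)) * (‖z‖ * (Real.exp (Δ * (s * ‖z‖)) *
            ∑ j ∈ Finset.range l.length, (s * ‖z‖) ^ j / j.factorial * c (j + 1))) := by
            gcongr
        _ = (Real.exp (Δ * ((t - s) * ‖z‖)) * Real.exp (Δ * (s * ‖z‖))) * (‖z‖ *
            ∑ j ∈ Finset.range l.length, (s * ‖z‖) ^ j / j.factorial * c (j + 1)) := by ring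
        _ = _ := by rw [← Real.exp_add]; ring_nf

lemma T_bound (m : ℕ) (ω : ℕ → ℂ) (Δ : ℝ) (l : List ℕ) :
    ∀ (b : ℕ → Polynomial ℂ), (∀ i ∈ l, ‖ω i‖ ≤ Δ) →
    ∀ d : ℕ → ℝ, (∀ q, ‖iteratedDeriv q (E m ω b) 0‖ ≤ d q) →
    ‖E m ω (T ω l b) 0‖ ≤ ∑ ij ∈ Finset.HasAntidiagonal.antidiagonal l.length,
      (l.length.choose ij.1 : ℝ) * (Δ ^ ij.1 * d ij.2) := by
  induction l with
  | nil =>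
    intro b _ d hd
    simpa [T] using hd 0
  | cons i l ih =>
    intro b hω d hd
    have hωi : ‖ω i‖ ≤ Δ := hω i (by simp)
    have := ih (step ω i b) (fun j hj => hω j (List.mem_cons_of_mem _ hj))
      (fun q => d (q + 1) + Δ * d q) (fun q => by
        rw [iter_E_step]
        refine (norm_sub_le _ _).trans ?_
        rw [norm_mul]
        have := hd q
        have h0 : 0 ≤ Δ := (norm_nonneg _).trans hωi
        gcongr
        exact hd (q + 1))
    rw [List.length_cons, Finset.sum_antidiagonal_choose_succ_mul (fun p q => Δ ^ p * d q),
      ← Finset.sum_add_distrib]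
    refine this.trans (le_of_eq (Finset.sum_congr rfl fun ij hij => ?_))
    rw [← Nat.choose_symm_of_eq_add (Finset.HasAntidiagonal.mem_antidiagonal.1 hij).symm]
    ring

lemma growth2 (m : ℕ) (ω : ℕ → ℂ) (Δ : ℝ) (hΔ : 0 ≤ Δ) (z : ℂ) (l : List ℕ)
    (b : ℕ → Polynomial ℂ) (hω : ∀ i ∈ l, ‖ω i‖ ≤ Δ)
    (hb : ∀ k ∈ Finset.range (m + 1), (b k).degree < (l.count k : ℕ))
    (R M : ℝ) (hR : 0 < R) (hM : ∀ w ∈ Metric.sphere (0 : ℂ) R, ‖E m ω b w‖ ≤ M) (hM0 : 0 ≤ M) :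
    ‖E m ω b z‖ ≤ Real.exp (Δ * ‖z‖) * (Real.exp (R * Δ) * M *
      ∑ j ∈ Finset.range l.length, (‖z‖ / R) ^ j) := by
  have hd : ∀ q, ‖iteratedDeriv q (E m ω b) 0‖ ≤ q.factorial * M / R ^ q := fun q =>
    Complex.norm_iteratedDeriv_le_of_forall_mem_sphere_norm_le q hR
      (differentiable_E m ω b).diffContOnCl hM
  have hc : ∀ j < l.length, ‖E m ω (T ω (l.take j) b) 0‖ ≤
      j.factorial / R ^ j * (Real.exp (R * Δ) * M) := by
    intro j hj
    have h1 := T_bound m ω Δ (l.take j) b (fun i hi => hω i (List.mem_of_mem_take hi)) _ hd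
    have hl : (l.take j).length = j := by simp; omega
    rw [hl] at h1
    refine h1.trans ?_
    calc _ = ∑ ij ∈ Finset.HasAntidiagonal.antidiagonal j,
          (j.factorial / R ^ j * M) * ((R * Δ) ^ ij.1 / ij.1.factorial) := by
          refine Finset.sum_congr rfl fun ij hij => ?_
          obtain ⟨p, q⟩ := ij
          have hj : p + q = j := Finset.HasAntidiagonal.mem_antidiagonal.1 hij
          subst hj
          have h := Nat.add_choose_mul_factorial_mul_factorial p q
          have h' : ((p + q).choose p : ℝ) * p.factorial * q.factorial = (p + q).factorial := by
            rw [Nat.choose_symm_add]; exact_mod_cast h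
          simp only
          rw [← h']
          have : (p.factorial : ℝ) ≠ 0 := by positivity
          field_simp
          ring
      _ = (j.factorial / R ^ j * M) * ∑ p ∈ Finset.range (j + 1),
          ((R * Δ) ^ p / p.factorial) := by
          rw [← Finset.mul_sum, Finset.Nat.sum_antidiagonal_eq_sum_range_succ_mk]
      _ ≤ (j.factorial / R ^ j * M) * Real.exp (R * Δ) := by
          gcongr
          exact Real.sum_le_exp_of_nonneg (by positivity) _
      _ = _ := by ring
  have := growth m ω Δ z l b hω hb _ hc 1 (by simp)
  simp only [Complex.ofReal_one, one_mul] at this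
  refine this.trans (le_of_eq ?_)
  congr 1
  rw [Finset.mul_sum]
  refine Finset.sum_congr rfl fun j _ => ?_
  have : (j.factorial : ℝ) ≠ 0 := by positivity
  rw [div_pow]
  field_simp

lemma indep (m : ℕ) (ω : ℕ → ℂ) (hinj : Function.Injective ω) (l : List ℕ) :
    ∀ (b : ℕ → Polynomial ℂ),
    (∀ k ∈ Finset.range (m + 1), (b k).degree < (l.count k : ℕ)) →
    (∀ z, E m ω b z = 0) → ∀ k ∈ Finset.range (m + 1), b k = 0 := by
  induction l with
  | nil =>
    intro b hb _ k hk
    rw [← degree_eq_bot]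
    simpa [Nat.WithBot.lt_zero_iff] using hb k hk
  | cons i l ih =>
    intro b hb hE k hk
    have hE' : E m ω b = fun _ => 0 := funext hE
    have h := ih (step ω i b) (fun k hk => degree_step ω i l b k (hb k hk))
      (fun z => by rw [E_step, hE']; simp)
    have hne : ∀ k ∈ Finset.range (m + 1), k ≠ i → b k = 0 := by
      intro k hk hki
      by_contra h0
      have h1 := h k hk
      unfold step at h1
      have h2 : C (ω k - ω i) * b k = - derivative (b k) := by
        rw [eq_neg_iff_add_eq_zero, add_comm]; exact h1
      have h3 := degree_derivative_lt h0
      rw [← degree_neg, ← h2, degree_C_mul (sub_ne_zero.2 (hinj.ne hki))] at h3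
      exact lt_irrefl _ h3
    by_cases hki : k = i
    · subst hki
      have h1 := h k hk
      unfold step at h1
      simp only [sub_self, map_zero, zero_mul, add_zero] at h1
      have h2 := hE 0
      unfold E at h2
      rw [Finset.sum_eq_single_of_mem k hk (fun j hj hjk => by rw [hne j hj hjk]; simp)] at h2
      have h3 := Polynomial.eq_C_of_derivative_eq_zero h1
      rw [h3] at h2 ⊢
      simpa using h2
    · exact hne k hk hki

lemma exists_list (m n : ℕ) : ∃ l : List ℕ, (∀ i ∈ l, i ≤ m) ∧ l.length = (m + 1) * n ∧
    ∀ k ≤ m, l.count k = n := by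
  induction n with
  | zero => exact ⟨[], by simp⟩
  | succ n ih =>
    obtain ⟨l, h1, h2, h3⟩ := ih
    refine ⟨List.range (m + 1) ++ l, ?_, ?_, ?_⟩
    · intro i hi
      rcases List.mem_append.1 hi with h | h
      · have := List.mem_range.1 h; omega
      · exact h1 i h
    · rw [List.length_append, h2, List.length_range]; ring
    · intro k hk
      rw [List.count_append, h3 k hk, List.count_eq_one_of_mem List.nodup_range
        (List.mem_range.2 (by omega))]
      ring

lemma exists_factor (S : Finset ℂ) : ∀ F : ℂ → ℂ, Differentiable ℂ F → (∀ a ∈ S, F a = 0) →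
    ∃ G : ℂ → ℂ, Differentiable ℂ G ∧ ∀ z, F z = (∏ a ∈ S, (z - a)) * G z := by
  induction S using Finset.induction_on with
  | empty => intro F hF _; exact ⟨F, hF, by simp⟩
  | insert a S ha ih =>
    intro F hF h0
    have hFa : F a = 0 := h0 a (by simp)
    have hd : ∀ z, F z = (z - a) * dslope F a z := fun z => by
      have := sub_smul_dslope F a z
      rw [hFa, sub_zero, smul_eq_mul] at this
      exact this.symm
    obtain ⟨G, hG, h⟩ := ih (dslope F a)
      (differentiableOn_univ.1 ((Complex.differentiableOn_dslope Filter.univ_mem).2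
        hF.differentiableOn))
      (fun c hc => by
        have h1 := hd c
        rw [h0 c (by simp [hc])] at h1
        have h2 : c - a ≠ 0 := sub_ne_zero.2 (fun e => ha (e ▸ hc))
        exact (mul_eq_zero.1 h1.symm).resolve_left h2)
    refine ⟨G, hG, fun z => ?_⟩
    rw [hd z, h z, Finset.prod_insert ha]
    ring

lemma count_bound (F : ℂ → ℂ) (hF : Differentiable ℂ F) (R : ℝ) (hR : 0 < R) (S : Finset ℂ)
    (hS : ∀ a ∈ S, ‖a‖ ≤ R ∧ F a = 0) (K : ℝ) (hK : ∀ z, ‖z‖ = 7 * R → ‖F z‖ ≤ K)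
    (z₀ : ℂ) (hz : ‖z₀‖ ≤ R) : 3 ^ S.card * ‖F z₀‖ ≤ K := by
  obtain ⟨G, hG, h⟩ := exists_factor S F hF (fun a ha => (hS a ha).2)
  have hR7 : (7 * R) ≠ 0 := by positivity
  have hGb : ‖G z₀‖ ≤ K / (6 * R) ^ S.card := by
    refine Complex.norm_le_of_forall_mem_frontier_norm_le (U := Metric.ball (0 : ℂ) (7 * R))
      Metric.isBounded_ball hG.diffContOnCl ?_ ?_
    · intro w hw
      rw [frontier_ball _ hR7, mem_sphere_zero_iff_norm] at hw
      rw [le_div_iff₀ (by positivity)]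
      have h1 := hK w hw
      rw [h w, norm_mul, norm_prod] at h1
      refine le_trans ?_ h1
      rw [mul_comm]
      gcongr
      rw [← Finset.prod_const]
      refine Finset.prod_le_prod (fun _ _ => by positivity) fun a ha => ?_
      have := norm_sub_norm_le w a
      have := (hS a ha).1
      linarith
    · apply subset_closure
      rw [mem_ball_zero_iff]; linarith
  rw [h z₀, norm_mul, norm_prod]
  have hp : ∏ a ∈ S, ‖z₀ - a‖ ≤ (2 * R) ^ S.card := by
    rw [← Finset.prod_const]
    refine Finset.prod_le_prod (fun _ _ => by positivity) fun a ha => ?_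
    have := norm_sub_le z₀ a
    have := (hS a ha).1
    linarith
  calc _ ≤ 3 ^ S.card * ((2 * R) ^ S.card * (K / (6 * R) ^ S.card)) := by gcongr
    _ = K := by
      rw [show 6 * R = 3 * (2 * R) by ring, mul_pow 3 (2 * R)]
      field_simp

lemma card_le (m n : ℕ) (b : ℕ → Polynomial ℂ) (hb : ∀ k ≤ m, (b k).natDegree ≤ n)
    (hne : ∃ k ≤ m, b k ≠ 0) (R : ℝ) (hR : 0 < R) (S : Finset ℂ)
    (hS : ∀ w ∈ S, ‖w‖ ≤ R ∧
      ∑ k ∈ Finset.range (m + 1), (b k).eval w * Complex.exp (k * w) = 0) :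
    (S.card : ℝ) ≤ 4 * (((m : ℝ) + 1) * ((n : ℝ) + 1) + (m : ℝ) * R) := by
  let ω : ℕ → ℂ := fun k => ((k - m / 2 : ℝ) : ℂ)
  have hinj : Function.Injective ω := by
    intro i j hij
    have : (i - m / 2 : ℝ) = j - m / 2 := Complex.ofReal_injective hij
    have : (i : ℝ) = j := by linarith
    exact_mod_cast this
  have hωb : ∀ i ≤ m, ‖ω i‖ ≤ (m / 2 : ℝ) := by
    intro i hi
    have : (i : ℝ) ≤ m := by exact_mod_cast hi
    simp only [ω]
    rw [Complex.norm_real, Real.norm_eq_abs, abs_le]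
    constructor
    · have : (0 : ℝ) ≤ i := by positivity
      linarith
    · linarith
  have hEF : ∀ w, E m ω b w = Complex.exp (-(m / 2 * w)) *
      ∑ k ∈ Finset.range (m + 1), (b k).eval w * Complex.exp (k * w) := by
    intro w
    unfold E
    rw [Finset.mul_sum]
    refine Finset.sum_congr rfl fun k _ => ?_
    rw [mul_left_comm, ← Complex.exp_add]
    congr 2
    simp only [ω]
    push_cast
    ring
  obtain ⟨l, hl1, hl2, hl3⟩ := exists_list m (n + 1)
  have hdeg : ∀ k ∈ Finset.range (m + 1), (b k).degree < (l.count k : ℕ) := by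
    intro k hk
    have hk' : k ≤ m := by have := Finset.mem_range.1 hk; omega
    rw [hl3 k hk']
    refine lt_of_le_of_lt degree_le_natDegree ?_
    have := hb k hk'
    have : (b k).natDegree < n + 1 := by omega
    exact_mod_cast this
  obtain ⟨z₀, hz₀, hmax⟩ := (isCompact_closedBall (0 : ℂ) R).exists_isMaxOn
    ⟨0, by simp [hR.le]⟩ (differentiable_E m ω b).continuous.norm.continuousOn
  have hg := fun z => growth2 m ω (m / 2) (by positivity) z l b
    (fun i hi => hωb i (hl1 i hi)) hdeg R ‖E m ω b z₀‖ hR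
    (fun w hw => hmax (Metric.sphere_subset_closedBall hw)) (norm_nonneg _)
  have hpos : 0 < ‖E m ω b z₀‖ := by
    rw [norm_pos_iff]
    intro h0
    obtain ⟨k, hk, hk0⟩ := hne
    refine hk0 (indep m ω hinj l b hdeg (fun z => ?_) k (Finset.mem_range.2 (by omega)))
    have := hg z
    rw [h0] at this
    simpa using this
  have hsum : ∑ j ∈ Finset.range l.length, (7 : ℝ) ^ j ≤ 7 ^ l.length := by
    rw [geom_sum_eq (by norm_num)]
    have : (1 : ℝ) ≤ 7 ^ l.length := one_le_pow₀ (by norm_num)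
    rw [div_le_iff₀ (by norm_num)]
    linarith
  have hc := count_bound (E m ω b) (differentiable_E m ω b) R hR S
    (fun a ha => ⟨(hS a ha).1, by rw [hEF, (hS a ha).2, mul_zero]⟩)
    (Real.exp (4 * m * R) * 7 ^ l.length * ‖E m ω b z₀‖) ?_ z₀ (by simpa using hz₀)
  · have h1 := le_of_mul_le_mul_right hc hpos
    have e1 : Real.exp 1 ≤ 3 := Real.exp_one_lt_three.le
    have e2 : (7 : ℝ) ≤ Real.exp 2 := by
      have h := Real.exp_one_gt_d9
      have : Real.exp 2 = Real.exp 1 * Real.exp 1 := by rw [← Real.exp_add]; norm_num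
      rw [this]
      nlinarith
    have h2 : Real.exp S.card ≤ Real.exp (4 * m * R + l.length * 2) := by
      calc Real.exp S.card = Real.exp 1 ^ S.card := by rw [← Real.exp_nat_mul, mul_one]
        _ ≤ 3 ^ S.card := by gcongr
        _ ≤ Real.exp (4 * m * R) * 7 ^ l.length := h1
        _ ≤ Real.exp (4 * m * R) * Real.exp 2 ^ l.length := by gcongr
        _ = _ := by rw [Real.exp_add, Real.exp_nat_mul]
    have h3 := Real.exp_le_exp.1 h2
    rw [hl2] at h3
    push_cast at h3
    have : (0 : ℝ) ≤ ((m : ℝ) + 1) * ((n : ℝ) + 1) := by positivity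
    linarith
  · intro z hz
    have h1 := hg z
    rw [hz, mul_div_assoc, div_self hR.ne', mul_one] at h1
    refine h1.trans ?_
    calc _ ≤ Real.exp (m / 2 * (7 * R)) * (Real.exp (R * (m / 2)) * ‖E m ω b z₀‖ *
          7 ^ l.length) := by gcongr
      _ = (Real.exp (m / 2 * (7 * R)) * Real.exp (R * (m / 2))) * 7 ^ l.length *
          ‖E m ω b z₀‖ := by ring
      _ = _ := by rw [← Real.exp_add]; ring_nf

end TZ


/-- (Tijdeman's zero-counting estimate, as used in Baker's Lemma 1.)
There is an absolute constant `A ≤ 4` such that every exponential polynomial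
`F(w) = Σ_{k=0}^m b_k(w) e^{kw}` with `m ≥ 1`, polynomial coefficients `b_k` of degree
at most `n`, not all zero, has at most `A((m+1)(n+1) + mR)` zeros (without multiplicity)
in the closed disk `|w| ≤ R`. -/
theorem tijdeman_zero_count :
    ∃ A : ℝ, 0 < A ∧ A ≤ 4 ∧
      ∀ m n : ℕ, 1 ≤ m →
      ∀ b : ℕ → Polynomial ℂ, (∀ k ≤ m, (b k).natDegree ≤ n) →
        (∃ k ≤ m, b k ≠ 0) →
      ∀ R : ℝ, 0 < R →
        ∃ S : Finset ℂ,
          (∀ w ∈ Metric.closedBall (0 : ℂ) R,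
            ∑ k ∈ Finset.range (m + 1), (b k).eval w * Complex.exp (k * w) = 0 →
              w ∈ S) ∧
          (S.card : ℝ) ≤ A * (((m : ℝ) + 1) * ((n : ℝ) + 1) + (m : ℝ) * R) := by

  refine ⟨4, by norm_num, le_rfl, ?_⟩
  intro m n _ b hb hne R hR
  have key := TZ.card_le m n b hb hne R hR
  set Z : Set ℂ := {w | ‖w‖ ≤ R ∧
    ∑ k ∈ Finset.range (m + 1), (b k).eval w * Complex.exp (k * w) = 0} with hZ
  have hfin : Z.Finite := by
    by_contra h
    obtain ⟨N, hN⟩ := exists_nat_gt (4 * (((m : ℝ) + 1) * ((n : ℝ) + 1) + (m : ℝ) * R))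
    obtain ⟨t, ht, hcard⟩ := Set.Infinite.exists_subset_card_eq h N
    have := key t (fun w hw => ht hw)
    rw [hcard] at this
    linarith
  refine ⟨hfin.toFinset, ?_, key _ (fun w hw => by simpa [hZ] using hw)⟩
  intro w hw h0
  rw [Set.Finite.mem_toFinset]
  exact ⟨by simpa using hw, h0⟩
end
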